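/- arXiv:1211.2224 — 2 statements merged into one kernel-verified Lean document; each statement's English description precedes it below -/
import Mathlib

section
/- Let Ω = (−h₁/2, h₁/2)×(−h₂/2, h₂/2) with h₁,h₂ > 0 and Γ = ∂Ω. For α > 0 let z₀(α) denote the unique root of the equation tanh(z/α)·tan(zα) = 1 with 0 < z₀(α)·α < π/2, and set α₀ = √(max{h₁,h₂}/min{h₁,h₂}). Then the sharp constant C₂(Ω,Γ) in the inequality ‖w‖_{L²(Γ)} ≤ C₂‖∇w‖_{L²(Ω)} for all w ∈ H̃¹(Ω,Γ) is equal to ( (2 z₀(α₀)/√(h₁h₂)) · tanh(z₀(α₀)/α₀) )^{-1/2}. -/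
open MeasureTheory Real

/-!
Write the rectangle as `[-a, a] × [-b, b]` with `a ≤ b`, and let `k` solve `tanh (k a) = cot (k b)`.

The function `cosh (k x) sin (k y)` is harmonic and its normal derivative is `λ = k tanh (k a)`
times itself on all four sides, so Green's identity gives equality in `λ ∫_Γ W² ≤ ∫_Ω |∇W|²`.

Conversely, completing squares with the Riccati solutions `k tanh (k x)` and `k cot (k y)` proves
the inequality for every `W` that vanishes on the line `y = 0` and, as `a ≤ b`, for those that
vanish on `x = 0`. This covers the parts of `W` that are odd in `y` or in `x`. A function that is
even in both variables is determined by its restriction to a quarter of the rectangle, which is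
similar to the whole; rescaling the quarter divides the energy by `4` and the boundary integral by
at most `2`. Splitting and folding `n` times therefore reduces the inequality, for `W` minus a
suitable constant, to a crude bound with an error of order `2⁻ⁿ`. Subtracting a constant does not
decrease `∫_Γ W²` when `W` has zero mean on `Γ`.
-/

section

open Set Filter Topology

section HyperbolicAndCotangent

theorem hasDerivAt_tanh (x : ℝ) : HasDerivAt tanh (1 - tanh x ^ 2) x := by
  have hcosh : cosh x ≠ 0 := (cosh_pos x).ne'
  have h := (hasDerivAt_sinh x).div (hasDerivAt_cosh x) hcosh
  rw [show sinh / cosh = tanh from funext fun y ↦ (tanh_eq_sinh_div_cosh y).symm] at h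
  refine h.congr_deriv ?_
  rw [tanh_eq_sinh_div_cosh]
  field_simp

@[fun_prop]
theorem continuous_tanh : Continuous tanh :=
  continuous_iff_continuousAt.2 fun x ↦ (hasDerivAt_tanh x).continuousAt

theorem monotone_tanh : Monotone tanh :=
  monotone_of_deriv_nonneg (fun x ↦ (hasDerivAt_tanh x).differentiableAt) fun x ↦ by
    rw [(hasDerivAt_tanh x).deriv, sub_nonneg, sq_le_one_iff_abs_le_one]
    exact (abs_tanh_lt_one x).le

theorem tanh_pos {x : ℝ} (hx : 0 < x) : 0 < tanh x := by
  rw [tanh_eq_sinh_div_cosh]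
  exact div_pos (sinh_pos_iff.2 hx) (cosh_pos x)

theorem hasDerivAt_cot {x : ℝ} (hx : sin x ≠ 0) : HasDerivAt cot (-(1 + cot x ^ 2)) x := by
  have h := (hasDerivAt_cos x).div (hasDerivAt_sin x) hx
  rw [show cos / sin = cot from funext fun y ↦ (cot_eq_cos_div_sin y).symm] at h
  refine h.congr_deriv ?_
  rw [cot_eq_cos_div_sin]
  field_simp
  ring

theorem antitoneOn_cot : AntitoneOn cot (Ioo 0 π) := by
  have hderiv : ∀ x ∈ Ioo 0 π, HasDerivAt cot (-(1 + cot x ^ 2)) x := fun x hx ↦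
    hasDerivAt_cot (sin_pos_of_pos_of_lt_pi hx.1 hx.2).ne'
  refine antitoneOn_of_deriv_nonpos (convex_Ioo 0 π)
    (fun x hx ↦ (hderiv x hx).continuousAt.continuousWithinAt) ?_ ?_
  · rw [interior_Ioo]
    exact fun x hx ↦ (hderiv x hx).differentiableAt.differentiableWithinAt
  · rw [interior_Ioo]
    intro x hx
    rw [(hderiv x hx).deriv, neg_nonpos]
    positivity

end HyperbolicAndCotangent

section Picone

variable {f f' : ℝ → ℝ}

/-- Completing the square: `f' ^ 2 + (F' + F ^ 2) * f ^ 2 - (F * f ^ 2)' = (f' - F * f) ^ 2`. -/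
theorem picone_integral_le {p q : ℝ} (hpq : p ≤ q) {F F' : ℝ → ℝ}
    (hf : ∀ t ∈ Icc p q, HasDerivAt f (f' t) t) (hf' : ContinuousOn f' (Icc p q))
    (hF : ∀ t ∈ Icc p q, HasDerivAt F (F' t) t) (hF' : ContinuousOn F' (Icc p q)) :
    F q * f q ^ 2 - F p * f p ^ 2 ≤ ∫ t in p..q, (f' t ^ 2 + (F' t + F t ^ 2) * f t ^ 2) := by
  have hf_cont : ContinuousOn f (Icc p q) := HasDerivAt.continuousOn hf
  have hF_cont : ContinuousOn F (Icc p q) := HasDerivAt.continuousOn hF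
  have hderiv_int : IntervalIntegrable
      (fun t ↦ F' t * f t ^ 2 + F t * (2 * f t * f' t)) volume p q :=
    ContinuousOn.intervalIntegrable_of_Icc hpq (by fun_prop)
  have hftc : ∫ t in p..q, (F' t * f t ^ 2 + F t * (2 * f t * f' t)) =
      F q * f q ^ 2 - F p * f p ^ 2 := by
    refine intervalIntegral.integral_eq_sub_of_hasDerivAt (f := fun t ↦ F t * f t ^ 2)
      (fun t ht ↦ ?_) hderiv_int
    rw [uIcc_of_le hpq] at ht
    exact ((hF t ht).mul ((hf t ht).pow 2)).congr_deriv (by simp)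
  rw [← hftc]
  refine intervalIntegral.integral_mono_on hpq hderiv_int
    (ContinuousOn.intervalIntegrable_of_Icc hpq (by fun_prop)) fun t _ ↦ ?_
  nlinarith [sq_nonneg (f' t - F t * f t)]

theorem tanh_mul_sq_add_sq_le_integral {a : ℝ} (k : ℝ) (ha : 0 ≤ a)
    (hf : ∀ t ∈ Icc (-a) a, HasDerivAt f (f' t) t) (hf' : ContinuousOn f' (Icc (-a) a)) :
    k * tanh (k * a) * (f (-a) ^ 2 + f a ^ 2) ≤
      ∫ t in (-a)..a, (f' t ^ 2 + k ^ 2 * f t ^ 2) := by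
  have hriccati : ∀ t ∈ Icc (-a) a, HasDerivAt (fun s ↦ k * tanh (k * s))
      (k ^ 2 - (k * tanh (k * t)) ^ 2) t := fun t _ ↦
    (((hasDerivAt_tanh (k * t)).comp t ((hasDerivAt_id t).const_mul k)).const_mul k).congr_deriv
      (by ring)
  have hpicone := picone_integral_le (by linarith) hf hf' hriccati (by fun_prop)
  simp only [sub_add_cancel, mul_neg, tanh_neg] at hpicone
  linarith

/-- The shift `δ` keeps the Riccati solution `k * cot (k * t + δ)` regular at `t = 0`. -/
theorem cot_add_mul_sq_le_integral_of_zero {r k δ : ℝ} (hr : 0 ≤ r) (hk : 0 ≤ k) (hδ : 0 < δ)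
    (hδπ : k * r + δ < π) (hf : ∀ t ∈ Icc 0 r, HasDerivAt f (f' t) t)
    (hf' : ContinuousOn f' (Icc 0 r)) (h0 : f 0 = 0) :
    k * cot (k * r + δ) * f r ^ 2 ≤ ∫ t in 0..r, (f' t ^ 2 - k ^ 2 * f t ^ 2) := by
  have hriccati : ∀ t ∈ Icc 0 r, HasDerivAt (fun s ↦ k * cot (k * s + δ))
      (-k ^ 2 - (k * cot (k * t + δ)) ^ 2) t := by
    intro t ht
    have hsin : sin (k * t + δ) ≠ 0 := by
      have hlower : 0 ≤ k * t := mul_nonneg hk ht.1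
      have hupper : k * t ≤ k * r := mul_le_mul_of_nonneg_left ht.2 hk
      exact (sin_pos_of_pos_of_lt_pi (by linarith) (by linarith)).ne'
    refine (((hasDerivAt_cot hsin).comp t
      (((hasDerivAt_id t).const_mul k).add_const δ)).const_mul k).congr_deriv ?_
    ring
  have hcont := HasDerivAt.continuousOn hriccati
  have hpicone := picone_integral_le hr hf hf' hriccati (by fun_prop)
  simpa [h0, sub_eq_add_neg] using hpicone

theorem cot_mul_sq_le_integral_of_zero {r k : ℝ} (hr : 0 < r) (hk : 0 < k) (hkr : k * r < π)
    (hf : ∀ t ∈ Icc 0 r, HasDerivAt f (f' t) t)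
    (hf' : ContinuousOn f' (Icc 0 r)) (h0 : f 0 = 0) :
    k * cot (k * r) * f r ^ 2 ≤ ∫ t in 0..r, (f' t ^ 2 - k ^ 2 * f t ^ 2) := by
  have hcot : ContinuousAt cot (k * r + 0) := by
    rw [add_zero]
    exact (hasDerivAt_cot (sin_pos_of_pos_of_lt_pi (mul_pos hk hr) hkr).ne').continuousAt
  have hshift : ContinuousAt (fun δ ↦ k * cot (k * r + δ) * f r ^ 2) 0 :=
    ((hcot.comp (f := fun δ ↦ k * r + δ) (by fun_prop)).const_mul k).mul_const _
  have hlim := hshift.tendsto.mono_left (nhdsWithin_le_nhds (s := Ioi 0))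
  rw [add_zero] at hlim
  refine le_of_tendsto hlim ?_
  filter_upwards [Ioo_mem_nhdsGT (sub_pos.2 hkr)] with δ hδ
  exact cot_add_mul_sq_le_integral_of_zero hr.le hk.le hδ.1 (by linarith [hδ.2]) hf hf' h0

theorem cot_mul_sq_add_sq_le_integral_of_zero {r k : ℝ} (hr : 0 < r) (hk : 0 < k)
    (hkr : k * r < π) (hf : ∀ t ∈ Icc (-r) r, HasDerivAt f (f' t) t)
    (hf' : ContinuousOn f' (Icc (-r) r)) (h0 : f 0 = 0) :
    k * cot (k * r) * (f (-r) ^ 2 + f r ^ 2) ≤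
      ∫ t in (-r)..r, (f' t ^ 2 - k ^ 2 * f t ^ 2) := by
  have hf_cont : ContinuousOn f (Icc (-r) r) := HasDerivAt.continuousOn hf
  have hright : Icc 0 r ⊆ Icc (-r) r := Icc_subset_Icc_left (by linarith)
  have hleft : ∀ t ∈ Icc 0 r, -t ∈ Icc (-r) r := fun t ht ↦ ⟨by linarith [ht.2], by linarith [ht.1]⟩
  have hpos := cot_mul_sq_le_integral_of_zero hr hk hkr (fun t ht ↦ hf t (hright ht))
    (hf'.mono hright) h0
  have hneg := cot_mul_sq_le_integral_of_zero (f := fun t ↦ f (-t)) (f' := fun t ↦ -f' (-t))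
    hr hk hkr
    (fun t ht ↦ ((hf _ (hleft t ht)).comp t (hasDerivAt_neg t)).congr_deriv (mul_neg_one _))
    (hf'.comp continuousOn_neg hleft).neg (by simpa using h0)
  have hreflect : ∫ t in 0..r, ((-f' (-t)) ^ 2 - k ^ 2 * f (-t) ^ 2) =
      ∫ t in (-r)..0, (f' t ^ 2 - k ^ 2 * f t ^ 2) := by
    simp only [neg_sq]
    rw [intervalIntegral.integral_comp_neg fun t ↦ f' t ^ 2 - k ^ 2 * f t ^ 2, neg_zero]
  have hintegrable : IntervalIntegrable (fun t ↦ f' t ^ 2 - k ^ 2 * f t ^ 2) volume (-r) r :=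
    ContinuousOn.intervalIntegrable_of_Icc (by linarith) (by fun_prop)
  have hmem : (0 : ℝ) ∈ uIcc (-r) r := mem_uIcc_of_le (by linarith) hr.le
  rw [← intervalIntegral.integral_add_adjacent_intervals
    (hintegrable.mono_set (uIcc_subset_uIcc_left hmem))
    (hintegrable.mono_set (uIcc_subset_uIcc_right hmem))]
  linarith

end Picone

section RectangleIntegrals

variable {a b : ℝ} {G H : ℝ × ℝ → ℝ}

/-- The integral of `G` over the rectangle `[-a, a] × [-b, b]`, as an iterated integral. -/
noncomputable def rectIntegral (a b : ℝ) (G : ℝ × ℝ → ℝ) : ℝ :=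
  ∫ x in (-a)..a, ∫ y in (-b)..b, G (x, y)

/-- The integral of `G` over the boundary of the rectangle `[-a, a] × [-b, b]` with respect to arc
length, with opposite sides grouped together. -/
noncomputable def boundaryIntegral (a b : ℝ) (G : ℝ × ℝ → ℝ) : ℝ :=
  (∫ t in (-b)..b, (G (-a, t) + G (a, t))) + ∫ s in (-a)..a, (G (s, -b) + G (s, b))

theorem continuous_integral_snd (hG : Continuous G) (c d : ℝ) :
    Continuous fun x ↦ ∫ y in c..d, G (x, y) :=
  intervalIntegral.continuous_parametric_intervalIntegral_of_continuous' (f := fun x y ↦ G (x, y))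
    hG c d

theorem rectIntegral_swap (hG : Continuous G) :
    rectIntegral b a (fun p ↦ G p.swap) = rectIntegral a b G := by
  refine intervalIntegral_intervalIntegral_swap ?_
  exact ((hG.comp continuous_swap).continuousOn.integrableOn_compact
    (isCompact_uIcc.prod isCompact_uIcc)).mono_set
      (prod_mono uIoc_subset_uIcc uIoc_subset_uIcc)

theorem rectIntegral_add (hG : Continuous G) (hH : Continuous H) :
    rectIntegral a b (fun p ↦ G p + H p) = rectIntegral a b G + rectIntegral a b H := by
  unfold rectIntegral
  rw [← intervalIntegral.integral_add ((continuous_integral_snd hG _ _).intervalIntegrable _ _)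
    ((continuous_integral_snd hH _ _).intervalIntegrable _ _)]
  congr with x
  exact intervalIntegral.integral_add (Continuous.intervalIntegrable (by fun_prop) _ _)
    (Continuous.intervalIntegrable (by fun_prop) _ _)

theorem rectIntegral_const_mul (c : ℝ) :
    rectIntegral a b (fun p ↦ c * G p) = c * rectIntegral a b G := by
  simp only [rectIntegral, intervalIntegral.integral_const_mul]

theorem rectIntegral_nonneg (ha : 0 ≤ a) (hb : 0 ≤ b) (hG : ∀ p, 0 ≤ G p) :
    0 ≤ rectIntegral a b G :=
  intervalIntegral.integral_nonneg (by linarith) fun _ _ ↦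
    intervalIntegral.integral_nonneg (by linarith) fun _ _ ↦ hG _

theorem rectIntegral_reflect : rectIntegral a b (fun p ↦ G (p.1, -p.2)) = rectIntegral a b G := by
  unfold rectIntegral
  congr with x
  rw [intervalIntegral.integral_comp_neg fun y ↦ G (x, y), neg_neg]

theorem rectIntegral_symmetrize (hG : Continuous G) :
    rectIntegral a b (fun p ↦ 2⁻¹ * (G p + G (p.1, -p.2))) = rectIntegral a b G := by
  rw [rectIntegral_const_mul, rectIntegral_add (H := fun p ↦ G (p.1, -p.2)) hG (by fun_prop),
    rectIntegral_reflect]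
  ring

theorem boundaryIntegral_swap :
    boundaryIntegral b a (fun p ↦ G p.swap) = boundaryIntegral a b G :=
  add_comm _ _

theorem boundaryIntegral_add (hG : Continuous G) (hH : Continuous H) :
    boundaryIntegral a b (fun p ↦ G p + H p) =
      boundaryIntegral a b G + boundaryIntegral a b H := by
  unfold boundaryIntegral
  rw [add_add_add_comm (∫ t in (-b)..b, _), ← intervalIntegral.integral_add,
    ← intervalIntegral.integral_add]
  · congr! 3 <;> ring
  all_goals exact Continuous.intervalIntegrable (by fun_prop) _ _

theorem boundaryIntegral_const_mul (c : ℝ) :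
    boundaryIntegral a b (fun p ↦ c * G p) = c * boundaryIntegral a b G := by
  simp only [boundaryIntegral, ← mul_add, intervalIntegral.integral_const_mul]

theorem boundaryIntegral_const (c : ℝ) :
    boundaryIntegral a b (fun _ ↦ c) = 4 * (a + b) * c := by
  simp only [boundaryIntegral, intervalIntegral.integral_const, smul_eq_mul]
  ring

theorem boundaryIntegral_le_of_forall_le (ha : 0 ≤ a) (hb : 0 ≤ b) (hG : Continuous G) {M : ℝ}
    (hM : ∀ p ∈ Icc (-a) a ×ˢ Icc (-b) b, G p ≤ M) :
    boundaryIntegral a b G ≤ 4 * (a + b) * M := by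
  rw [← boundaryIntegral_const]
  refine add_le_add ?_ ?_
  · refine intervalIntegral.integral_mono_on (by linarith)
      (Continuous.intervalIntegrable (by fun_prop) _ _) (by simp) fun t ht ↦ add_le_add ?_ ?_
    · exact hM _ ⟨left_mem_Icc.2 (by linarith), ht⟩
    · exact hM _ ⟨right_mem_Icc.2 (by linarith), ht⟩
  · refine intervalIntegral.integral_mono_on (by linarith)
      (Continuous.intervalIntegrable (by fun_prop) _ _) (by simp) fun s hs ↦ add_le_add ?_ ?_
    · exact hM _ ⟨hs, left_mem_Icc.2 (by linarith)⟩
    · exact hM _ ⟨hs, right_mem_Icc.2 (by linarith)⟩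

theorem boundaryIntegral_reflect :
    boundaryIntegral a b (fun p ↦ G (p.1, -p.2)) = boundaryIntegral a b G := by
  unfold boundaryIntegral
  rw [intervalIntegral.integral_comp_neg fun t ↦ G (-a, t) + G (a, t)]
  simp only [neg_neg, add_comm]

theorem boundaryIntegral_symmetrize (hG : Continuous G) :
    boundaryIntegral a b (fun p ↦ 2⁻¹ * (G p + G (p.1, -p.2))) = boundaryIntegral a b G := by
  rw [boundaryIntegral_const_mul,
    boundaryIntegral_add (H := fun p ↦ G (p.1, -p.2)) hG (by fun_prop), boundaryIntegral_reflect]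
  ring

theorem boundaryIntegral_eq_zero_of_odd (hG : ∀ p, G (p.1, -p.2) = -G p) :
    boundaryIntegral a b G = 0 := by
  have hneg : boundaryIntegral a b (fun p ↦ -1 * G p) = boundaryIntegral a b G := by
    simp only [neg_one_mul, ← hG, boundaryIntegral_reflect]
  rw [boundaryIntegral_const_mul] at hneg
  linarith

theorem mul_integral_horizontal_sides_le_rectIntegral {lam : ℝ} (ha : 0 ≤ a) (hG : Continuous G)
    (hH : Continuous H) (hle : ∀ x, lam * (G (x, -b) + G (x, b)) ≤ ∫ y in (-b)..b, H (x, y)) :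
    lam * ∫ x in (-a)..a, (G (x, -b) + G (x, b)) ≤ rectIntegral a b H := by
  rw [← intervalIntegral.integral_const_mul]
  exact intervalIntegral.integral_mono_on (by linarith)
    (Continuous.intervalIntegrable (by fun_prop) _ _)
    ((continuous_integral_snd hH _ _).intervalIntegrable _ _) fun x _ ↦ hle x

end RectangleIntegrals

section Fold

variable {a b : ℝ} {G : ℝ × ℝ → ℝ}

/-- The similarity of ratio `1/2` that maps the rectangle `[-a, a] × [-b, b]` onto its quarter
`[0, a] × [0, b]`. -/
noncomputable def toQuarter (a b : ℝ) (p : ℝ × ℝ) : ℝ × ℝ :=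
  ((p.1 + a) / 2, (p.2 + b) / 2)

@[fun_prop]
theorem contDiff_toQuarter (a b : ℝ) {n : WithTop ℕ∞} : ContDiff ℝ n (toQuarter a b) := by
  unfold toQuarter
  fun_prop

theorem continuous_toQuarter (a b : ℝ) : Continuous (toQuarter a b) :=
  (contDiff_toQuarter a b (n := 0)).continuous

theorem toQuarter_mem {p : ℝ × ℝ} (hp : p ∈ Icc (-a) a ×ˢ Icc (-b) b) :
    toQuarter a b p ∈ Icc (-a) a ×ˢ Icc (-b) b := by
  obtain ⟨⟨_, _⟩, _, _⟩ := hp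
  refine ⟨⟨?_, ?_⟩, ?_, ?_⟩ <;> simp only [toQuarter] <;> linarith

theorem integral_comp_half_add_of_even {g : ℝ → ℝ} (hg : Continuous g) (heven : ∀ t, g (-t) = g t)
    (c : ℝ) : ∫ t in (-c)..c, g ((t + c) / 2) = ∫ t in (-c)..c, g t := by
  have hleft : ∫ t in (-c)..0, g t = ∫ t in 0..c, g t := by
    have hreflect := intervalIntegral.integral_comp_neg (a := 0) (b := c) g
    simpa only [heven, neg_zero] using hreflect.symm
  have hhalf : ∫ t in (-c)..c, g ((t + c) / 2) = 2 * ∫ t in 0..c, g t := by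
    have hsubst := intervalIntegral.integral_comp_div_add (a := -c) (b := c) g two_ne_zero (c / 2)
    simp only [← add_div, neg_add_cancel, add_self_div_two, zero_div, smul_eq_mul] at hsubst
    exact hsubst
  rw [hhalf, ← intervalIntegral.integral_add_adjacent_intervals (hg.intervalIntegrable (-c) 0)
    (hg.intervalIntegrable 0 c), hleft, two_mul]

theorem rectIntegral_comp_toQuarter (hG : Continuous G) (hfst : ∀ p, G (-p.1, p.2) = G p)
    (hsnd : ∀ p, G (p.1, -p.2) = G p) :
    rectIntegral a b (fun p ↦ G (toQuarter a b p)) = rectIntegral a b G := by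
  unfold rectIntegral toQuarter
  have hinner : ∀ x, ∫ y in (-b)..b, G (x, (y + b) / 2) = ∫ y in (-b)..b, G (x, y) := fun x ↦
    integral_comp_half_add_of_even (g := fun y ↦ G (x, y)) (by fun_prop) (fun y ↦ hsnd (x, y)) b
  simp only [hinner]
  exact integral_comp_half_add_of_even (continuous_integral_snd hG _ _)
    (fun x ↦ by simp only [fun y ↦ hfst (x, y)]) a

theorem integral_vertical_sides_le_toQuarter (hb : 0 ≤ b) (hG : Continuous G)
    (hnonneg : ∀ p, 0 ≤ G p) (hfst : ∀ p, G (-p.1, p.2) = G p) (hsnd : ∀ p, G (p.1, -p.2) = G p) :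
    ∫ t in (-b)..b, (G (-a, t) + G (a, t)) ≤
      2 * ∫ t in (-b)..b, (G (toQuarter a b (-a, t)) + G (toQuarter a b (a, t))) := by
  calc ∫ t in (-b)..b, (G (-a, t) + G (a, t))
      = 2 * ∫ t in (-b)..b, G (a, t) := by
        simp only [fun t ↦ hfst (a, t), ← two_mul, intervalIntegral.integral_const_mul]
    _ = 2 * ∫ t in (-b)..b, G (a, (t + b) / 2) := by
        rw [integral_comp_half_add_of_even (g := fun t ↦ G (a, t)) (by fun_prop)
          (fun t ↦ hsnd (a, t))]
    _ ≤ _ := by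
        have := continuous_toQuarter a b
        gcongr 2 * ?_
        refine intervalIntegral.integral_mono_on (by linarith)
          (Continuous.intervalIntegrable (by fun_prop) _ _)
          (Continuous.intervalIntegrable (by fun_prop) _ _) fun t _ ↦ ?_
        simp only [toQuarter, add_self_div_two]
        linarith [hnonneg ((-a + a) / 2, (t + b) / 2)]

/-- Folding turns the boundary of the rectangle into two of the four sides of the quarter. -/
theorem boundaryIntegral_le_toQuarter (ha : 0 ≤ a) (hb : 0 ≤ b) (hG : Continuous G)
    (hnonneg : ∀ p, 0 ≤ G p) (hfst : ∀ p, G (-p.1, p.2) = G p) (hsnd : ∀ p, G (p.1, -p.2) = G p) :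
    boundaryIntegral a b G ≤ 2 * boundaryIntegral a b (fun p ↦ G (toQuarter a b p)) := by
  have hvertical := integral_vertical_sides_le_toQuarter (a := a) hb hG hnonneg hfst hsnd
  have hhorizontal := integral_vertical_sides_le_toQuarter (a := b) ha (G := fun p ↦ G p.swap)
    (by fun_prop) (fun p ↦ hnonneg _) (fun p ↦ hsnd p.swap) (fun p ↦ hfst p.swap)
  rw [boundaryIntegral, boundaryIntegral, mul_add]
  exact add_le_add hvertical hhorizontal

end Fold

section Energy

variable {a b k lam : ℝ} {W : ℝ × ℝ → ℝ}

/-- The partial derivative of `W` with respect to the first coordinate. -/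
noncomputable def partialFst (W : ℝ × ℝ → ℝ) (p : ℝ × ℝ) : ℝ :=
  deriv (fun s ↦ W (s, p.2)) p.1

/-- The partial derivative of `W` with respect to the second coordinate. -/
noncomputable def partialSnd (W : ℝ × ℝ → ℝ) (p : ℝ × ℝ) : ℝ :=
  deriv (fun t ↦ W (p.1, t)) p.2

/-- The squared Euclidean length of the gradient of `W`. -/
noncomputable def gradSq (W : ℝ × ℝ → ℝ) (p : ℝ × ℝ) : ℝ :=
  partialFst W p ^ 2 + partialSnd W p ^ 2

/-- The Dirichlet energy of `W` on the rectangle `[-a, a] × [-b, b]`. -/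
noncomputable def energy (a b : ℝ) (W : ℝ × ℝ → ℝ) : ℝ :=
  rectIntegral a b (gradSq W)

theorem contDiff_comp_swap {n : WithTop ℕ∞} (hW : ContDiff ℝ n W) :
    ContDiff ℝ n fun p : ℝ × ℝ ↦ W p.swap :=
  hW.comp (contDiff_snd.prodMk contDiff_fst)

theorem partialFst_eq_fderiv (hW : Differentiable ℝ W) (p : ℝ × ℝ) :
    partialFst W p = fderiv ℝ W p (1, 0) :=
  ((hW p).hasFDerivAt.comp_hasDerivAt (f := fun s ↦ (s, p.2)) p.1
    ((hasDerivAt_id p.1).prodMk (hasDerivAt_const p.1 p.2))).deriv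

theorem partialSnd_eq_fderiv (hW : Differentiable ℝ W) (p : ℝ × ℝ) :
    partialSnd W p = fderiv ℝ W p (0, 1) :=
  ((hW p).hasFDerivAt.comp_hasDerivAt (f := fun t ↦ (p.1, t)) p.2
    ((hasDerivAt_const p.2 p.1).prodMk (hasDerivAt_id p.2))).deriv

theorem hasDerivAt_partialFst (hW : Differentiable ℝ W) (x y : ℝ) :
    HasDerivAt (fun s ↦ W (s, y)) (partialFst W (x, y)) x :=
  DifferentiableAt.hasDerivAt (by fun_prop)

theorem hasDerivAt_partialSnd (hW : Differentiable ℝ W) (x y : ℝ) :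
    HasDerivAt (fun t ↦ W (x, t)) (partialSnd W (x, y)) y :=
  DifferentiableAt.hasDerivAt (by fun_prop)

theorem contDiff_partialFst {n : WithTop ℕ∞} (hW : ContDiff ℝ (n + 1) W) :
    ContDiff ℝ n (partialFst W) := by
  rw [funext (partialFst_eq_fderiv (hW.differentiable (by simp)))]
  exact (hW.fderiv_right le_rfl).clm_apply contDiff_const

theorem contDiff_partialSnd {n : WithTop ℕ∞} (hW : ContDiff ℝ (n + 1) W) :
    ContDiff ℝ n (partialSnd W) := by
  rw [funext (partialSnd_eq_fderiv (hW.differentiable (by simp)))]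
  exact (hW.fderiv_right le_rfl).clm_apply contDiff_const

theorem continuous_partialFst (hW : ContDiff ℝ 1 W) : Continuous (partialFst W) :=
  (contDiff_partialFst (n := 0) (by simpa using hW)).continuous

theorem continuous_partialSnd (hW : ContDiff ℝ 1 W) : Continuous (partialSnd W) :=
  (contDiff_partialSnd (n := 0) (by simpa using hW)).continuous

theorem continuous_gradSq (hW : ContDiff ℝ 1 W) : Continuous (gradSq W) :=
  ((continuous_partialFst hW).pow 2).add ((continuous_partialSnd hW).pow 2)

theorem gradSq_nonneg (W : ℝ × ℝ → ℝ) (p : ℝ × ℝ) : 0 ≤ gradSq W p :=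
  add_nonneg (sq_nonneg _) (sq_nonneg _)

theorem gradSq_swap (p : ℝ × ℝ) : gradSq (fun q ↦ W q.swap) p = gradSq W p.swap :=
  add_comm _ _

theorem energy_nonneg (ha : 0 ≤ a) (hb : 0 ≤ b) : 0 ≤ energy a b W :=
  rectIntegral_nonneg ha hb (gradSq_nonneg W)

theorem energy_swap (hW : ContDiff ℝ 1 W) :
    energy b a (fun p ↦ W p.swap) = energy a b W := by
  rw [energy, funext gradSq_swap, rectIntegral_swap (continuous_gradSq hW), energy]

/-- The one-dimensional `tanh` and `cot` inequalities in the two coordinate directions carry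
opposite zeroth order terms `±k ^ 2 * W ^ 2`, which cancel. -/
theorem mul_boundaryIntegral_sq_le_energy_of_zero (ha : 0 ≤ a) (hb : 0 < b) (hk : 0 < k)
    (hkb : k * b < π) (htanh : lam ≤ k * tanh (k * a)) (hcot : lam ≤ k * cot (k * b))
    (hW : ContDiff ℝ 1 W) (hzero : ∀ x, W (x, 0) = 0) :
    lam * boundaryIntegral a b (fun p ↦ W p ^ 2) ≤ energy a b W := by
  have hdiff := hW.differentiable one_ne_zero
  have hcont := hW.continuous
  have hfst := continuous_partialFst hW
  have hsnd := continuous_partialSnd hW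
  have hhorizontal : lam * ∫ x in (-a)..a, (W (x, -b) ^ 2 + W (x, b) ^ 2) ≤
      rectIntegral a b (fun p ↦ partialSnd W p ^ 2 - k ^ 2 * W p ^ 2) :=
    mul_integral_horizontal_sides_le_rectIntegral ha (G := fun p ↦ W p ^ 2) (by fun_prop)
      (by fun_prop) fun x ↦ (mul_le_mul_of_nonneg_right hcot (by positivity)).trans <|
        cot_mul_sq_add_sq_le_integral_of_zero hb hk hkb
          (fun t _ ↦ hasDerivAt_partialSnd hdiff x t) (by fun_prop) (hzero x)
  have hvertical : lam * ∫ y in (-b)..b, (W (-a, y) ^ 2 + W (a, y) ^ 2) ≤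
      rectIntegral a b (fun p ↦ partialFst W p ^ 2 + k ^ 2 * W p ^ 2) := by
    rw [← rectIntegral_swap (by fun_prop)]
    exact mul_integral_horizontal_sides_le_rectIntegral hb.le (G := fun p ↦ W p.swap ^ 2)
      (H := fun p ↦ partialFst W p.swap ^ 2 + k ^ 2 * W p.swap ^ 2) (by fun_prop) (by fun_prop)
      fun y ↦ (mul_le_mul_of_nonneg_right htanh (by positivity)).trans <|
        tanh_mul_sq_add_sq_le_integral k ha
          (fun s _ ↦ hasDerivAt_partialFst hdiff s y) (by fun_prop)
  calc lam * boundaryIntegral a b (fun p ↦ W p ^ 2)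
      ≤ rectIntegral a b (fun p ↦ partialFst W p ^ 2 + k ^ 2 * W p ^ 2) +
          rectIntegral a b (fun p ↦ partialSnd W p ^ 2 - k ^ 2 * W p ^ 2) := by
        rw [boundaryIntegral, mul_add]
        exact add_le_add hvertical hhorizontal
    _ = energy a b W := by
        rw [← rectIntegral_add (by fun_prop) (by fun_prop), energy]
        congr with p
        rw [gradSq]
        ring

end Energy

section EvenOdd

variable {a b : ℝ} {W : ℝ × ℝ → ℝ}

/-- The part of `W` that is even in the second coordinate. -/
noncomputable def evenPart (W : ℝ × ℝ → ℝ) (p : ℝ × ℝ) : ℝ :=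
  (W p + W (p.1, -p.2)) / 2

/-- The part of `W` that is odd in the second coordinate. -/
noncomputable def oddPart (W : ℝ × ℝ → ℝ) (p : ℝ × ℝ) : ℝ :=
  (W p - W (p.1, -p.2)) / 2

theorem evenPart_reflect (W : ℝ × ℝ → ℝ) (p : ℝ × ℝ) :
    evenPart W (p.1, -p.2) = evenPart W p := by
  simp only [evenPart, neg_neg, add_comm]

theorem contDiff_evenPart {n : WithTop ℕ∞} (hW : ContDiff ℝ n W) : ContDiff ℝ n (evenPart W) := by
  unfold evenPart
  fun_prop

theorem contDiff_oddPart {n : WithTop ℕ∞} (hW : ContDiff ℝ n W) : ContDiff ℝ n (oddPart W) := by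
  unfold oddPart
  fun_prop

theorem oddPart_zero (W : ℝ × ℝ → ℝ) (x : ℝ) : oddPart W (x, 0) = 0 := by
  simp [oddPart]

theorem hasDerivAt_reflect (hW : Differentiable ℝ W) (x y : ℝ) :
    HasDerivAt (fun t ↦ W (x, -t)) (-partialSnd W (x, -y)) y :=
  ((hasDerivAt_partialSnd hW x (-y)).comp y (hasDerivAt_neg y)).congr_deriv (mul_neg_one _)

theorem gradSq_evenPart_add_oddPart (hW : Differentiable ℝ W) (p : ℝ × ℝ) :
    gradSq (evenPart W) p + gradSq (oddPart W) p =
      2⁻¹ * (gradSq W p + gradSq W (p.1, -p.2)) := by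
  have hfst := hasDerivAt_partialFst hW p.1
  have hsnd := hasDerivAt_partialSnd hW p.1
  have heven_fst : partialFst (evenPart W) p = (partialFst W p + partialFst W (p.1, -p.2)) / 2 :=
    (((hfst p.2).add (hfst (-p.2))).div_const 2).deriv
  have hodd_fst : partialFst (oddPart W) p = (partialFst W p - partialFst W (p.1, -p.2)) / 2 :=
    (((hfst p.2).sub (hfst (-p.2))).div_const 2).deriv
  have heven_snd : partialSnd (evenPart W) p = (partialSnd W p + -partialSnd W (p.1, -p.2)) / 2 :=
    (((hsnd p.2).add (hasDerivAt_reflect hW p.1 p.2)).div_const 2).deriv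
  have hodd_snd : partialSnd (oddPart W) p = (partialSnd W p - -partialSnd W (p.1, -p.2)) / 2 :=
    (((hsnd p.2).sub (hasDerivAt_reflect hW p.1 p.2)).div_const 2).deriv
  simp only [gradSq, heven_fst, hodd_fst, heven_snd, hodd_snd]
  ring

theorem gradSq_evenPart_le (hW : Differentiable ℝ W) {M : ℝ} {p : ℝ × ℝ} (hp : gradSq W p ≤ M)
    (hp_reflect : gradSq W (p.1, -p.2) ≤ M) : gradSq (evenPart W) p ≤ M := by
  linarith [gradSq_evenPart_add_oddPart hW p, gradSq_nonneg (oddPart W) p]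

theorem energy_evenPart_add_oddPart (hW : ContDiff ℝ 1 W) :
    energy a b (evenPart W) + energy a b (oddPart W) = energy a b W := by
  rw [energy, energy, ← rectIntegral_add (continuous_gradSq (contDiff_evenPart hW))
    (continuous_gradSq (contDiff_oddPart hW)),
    funext (gradSq_evenPart_add_oddPart (hW.differentiable one_ne_zero)),
    rectIntegral_symmetrize (continuous_gradSq hW), energy]

theorem boundaryIntegral_sq_evenPart_add_oddPart (hW : Continuous W) (c : ℝ) :
    boundaryIntegral a b (fun p ↦ (evenPart W p - c) ^ 2) +
      boundaryIntegral a b (fun p ↦ oddPart W p ^ 2) =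
        boundaryIntegral a b (fun p ↦ (W p - c) ^ 2) := by
  have hparallelogram : ∀ p, (evenPart W p - c) ^ 2 + oddPart W p ^ 2 =
      2⁻¹ * ((W p - c) ^ 2 + (W (p.1, -p.2) - c) ^ 2) := fun p ↦ by
    simp only [evenPart, oddPart]
    ring
  rw [← boundaryIntegral_add (by unfold evenPart; fun_prop) (by unfold oddPart; fun_prop),
    funext hparallelogram]
  exact boundaryIntegral_symmetrize (G := fun p ↦ (W p - c) ^ 2) (by fun_prop)

/-- The part of `W` that is even in each of the two coordinates. -/
noncomputable def doublyEvenPart (W : ℝ × ℝ → ℝ) (p : ℝ × ℝ) : ℝ :=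
  evenPart (fun q ↦ evenPart W q.swap) p.swap

theorem doublyEvenPart_reflect_fst (W : ℝ × ℝ → ℝ) (p : ℝ × ℝ) :
    doublyEvenPart W (-p.1, p.2) = doublyEvenPart W p :=
  evenPart_reflect _ p.swap

theorem doublyEvenPart_reflect_snd (W : ℝ × ℝ → ℝ) (p : ℝ × ℝ) :
    doublyEvenPart W (p.1, -p.2) = doublyEvenPart W p := by
  unfold doublyEvenPart
  rw [evenPart, evenPart]
  exact congr_arg (· / 2)
    (congr_arg₂ (· + ·) (evenPart_reflect W p) (evenPart_reflect W (-p.1, p.2)))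

theorem contDiff_doublyEvenPart {n : WithTop ℕ∞} (hW : ContDiff ℝ n W) :
    ContDiff ℝ n (doublyEvenPart W) :=
  contDiff_comp_swap (contDiff_evenPart (contDiff_comp_swap (contDiff_evenPart hW)))

theorem gradSq_doublyEvenPart_le (hW : ContDiff ℝ 1 W) {M : ℝ}
    (hM : ∀ p ∈ Icc (-a) a ×ˢ Icc (-b) b, gradSq W p ≤ M) {p : ℝ × ℝ}
    (hp : p ∈ Icc (-a) a ×ˢ Icc (-b) b) : gradSq (doublyEvenPart W) p ≤ M := by
  have heven : ∀ q ∈ Icc (-a) a ×ˢ Icc (-b) b, gradSq (evenPart W) q ≤ M := fun q hq ↦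
    gradSq_evenPart_le (hW.differentiable one_ne_zero) (hM q hq)
      (hM _ ⟨hq.1, neg_mem_Icc_iff.2 (by simpa using hq.2)⟩)
  have hswap := contDiff_comp_swap (contDiff_evenPart hW)
  unfold doublyEvenPart
  rw [gradSq_swap]
  refine gradSq_evenPart_le (hswap.differentiable one_ne_zero) ?_ ?_ <;> rw [gradSq_swap]
  · exact heven p hp
  · exact heven _ ⟨neg_mem_Icc_iff.2 (by simpa using hp.1), hp.2⟩

end EvenOdd

section TraceBound

variable {a b k lam δ M : ℝ} {W : ℝ × ℝ → ℝ}

theorem gradSq_comp_toQuarter (hW : Differentiable ℝ W) (p : ℝ × ℝ) :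
    gradSq (fun q ↦ W (toQuarter a b q)) p = gradSq W (toQuarter a b p) / 4 := by
  have hhalf : ∀ c t : ℝ, HasDerivAt (fun s ↦ (s + c) / 2) 2⁻¹ t := fun c t ↦
    (((hasDerivAt_id t).add_const c).div_const 2).congr_deriv (one_div 2)
  have hfst := (hasDerivAt_partialFst hW ((p.1 + a) / 2) ((p.2 + b) / 2)).comp p.1 (hhalf a p.1)
  have hsnd := (hasDerivAt_partialSnd hW ((p.1 + a) / 2) ((p.2 + b) / 2)).comp p.2 (hhalf b p.2)
  calc gradSq (fun q ↦ W (toQuarter a b q)) p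
      = (partialFst W (toQuarter a b p) * 2⁻¹) ^ 2 + (partialSnd W (toQuarter a b p) * 2⁻¹) ^ 2 :=
        congr_arg₂ (· ^ 2 + · ^ 2) hfst.deriv hsnd.deriv
    _ = gradSq W (toQuarter a b p) / 4 := by
        rw [gradSq]
        ring

theorem gradSq_reflect_of_even (heven : ∀ p, W (p.1, -p.2) = W p) (p : ℝ × ℝ) :
    gradSq W (p.1, -p.2) = gradSq W p := by
  have hfst : partialFst W (p.1, -p.2) = partialFst W p :=
    congr_arg (deriv · p.1) (funext fun s ↦ heven (s, p.2))
  have hslice : (fun t ↦ W (p.1, -t)) = fun t ↦ W (p.1, t) := funext fun t ↦ heven (p.1, t)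
  have hsnd : partialSnd W p = -partialSnd W (p.1, -p.2) := by
    have h := deriv_comp_neg (fun t ↦ W (p.1, t)) p.2
    rwa [hslice] at h
  rw [gradSq, gradSq, hfst, hsnd, neg_sq]

theorem energy_comp_toQuarter (hW : ContDiff ℝ 1 W) (hfst : ∀ p, W (-p.1, p.2) = W p)
    (hsnd : ∀ p, W (p.1, -p.2) = W p) :
    energy a b (fun p ↦ W (toQuarter a b p)) = energy a b W / 4 := by
  have hgrad_fst : ∀ p, gradSq W (-p.1, p.2) = gradSq W p := fun p ↦ by
    have h := gradSq_reflect_of_even (W := fun q ↦ W q.swap) (fun q ↦ hfst q.swap) p.swap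
    rwa [gradSq_swap, gradSq_swap] at h
  have hscale : ∀ p, gradSq (fun q ↦ W (toQuarter a b q)) p =
      4⁻¹ * gradSq W (toQuarter a b p) := fun p ↦ by
    rw [gradSq_comp_toQuarter (hW.differentiable one_ne_zero), div_eq_inv_mul]
  rw [energy, funext hscale, rectIntegral_const_mul, rectIntegral_comp_toQuarter
    (continuous_gradSq hW) hgrad_fst (gradSq_reflect_of_even hsnd), ← div_eq_inv_mul, energy]

/-- The trace inequality with constant `lam` on the boundary of the rectangle
`[-a, a] × [-b, b]`, for `W` shifted by a suitable constant and up to an error `δ`. -/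
def TraceBound (a b lam δ : ℝ) (W : ℝ × ℝ → ℝ) : Prop :=
  ∃ c, lam * boundaryIntegral a b (fun p ↦ (W p - c) ^ 2) ≤ energy a b W + δ

theorem TraceBound.of_swap (hW : ContDiff ℝ 1 W)
    (h : TraceBound b a lam δ fun p ↦ W p.swap) : TraceBound a b lam δ W := by
  obtain ⟨c, hc⟩ := h
  refine ⟨c, ?_⟩
  rwa [energy_swap hW, boundaryIntegral_swap (G := fun p ↦ (W p - c) ^ 2)] at hc

theorem TraceBound.of_evenPart (ha : 0 ≤ a) (hb : 0 < b) (hk : 0 < k) (hkb : k * b < π)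
    (htanh : lam ≤ k * tanh (k * a)) (hcot : lam ≤ k * cot (k * b)) (hW : ContDiff ℝ 1 W)
    (h : TraceBound a b lam δ (evenPart W)) : TraceBound a b lam δ W := by
  obtain ⟨c, hc⟩ := h
  refine ⟨c, ?_⟩
  have hodd := mul_boundaryIntegral_sq_le_energy_of_zero ha hb hk hkb htanh hcot
    (contDiff_oddPart hW) (oddPart_zero W)
  rw [← boundaryIntegral_sq_evenPart_add_oddPart hW.continuous,
    ← energy_evenPart_add_oddPart hW, mul_add]
  linarith

theorem TraceBound.of_doublyEvenPart (ha : 0 < a) (hab : a ≤ b) (hk : 0 < k) (hkb : k * b < π)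
    (htanh : lam ≤ k * tanh (k * a)) (hcot : lam ≤ k * cot (k * b)) (hW : ContDiff ℝ 1 W)
    (h : TraceBound a b lam δ (doublyEvenPart W)) : TraceBound a b lam δ W := by
  have hb : 0 < b := ha.trans_le hab
  have hka_le : k * a ≤ k * b := mul_le_mul_of_nonneg_left hab hk.le
  have hka : k * a < π := hka_le.trans_lt hkb
  have htanh' : lam ≤ k * tanh (k * b) :=
    htanh.trans (mul_le_mul_of_nonneg_left (monotone_tanh hka_le) hk.le)
  have hcot' : lam ≤ k * cot (k * a) :=
    hcot.trans (mul_le_mul_of_nonneg_left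
      (antitoneOn_cot ⟨mul_pos hk ha, hka⟩ ⟨mul_pos hk hb, hkb⟩ hka_le) hk.le)
  have hswap := contDiff_comp_swap (contDiff_evenPart hW)
  refine .of_evenPart ha.le hb hk hkb htanh hcot hW (.of_swap (contDiff_evenPart hW) ?_)
  exact .of_evenPart hb.le ha hk hka htanh' hcot' hswap (.of_swap (contDiff_evenPart hswap) h)

theorem TraceBound.of_toQuarter (ha : 0 ≤ a) (hb : 0 ≤ b) (hlam : 0 ≤ lam) (hW : ContDiff ℝ 1 W)
    (hfst : ∀ p, W (-p.1, p.2) = W p) (hsnd : ∀ p, W (p.1, -p.2) = W p)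
    (h : TraceBound a b lam (δ / 2) fun p ↦ W (toQuarter a b p)) : TraceBound a b lam δ W := by
  obtain ⟨c, hc⟩ := h
  refine ⟨c, ?_⟩
  have hcont := hW.continuous
  have hfold := boundaryIntegral_le_toQuarter (G := fun p ↦ (W p - c) ^ 2) ha hb (by fun_prop)
    (fun p ↦ sq_nonneg _) (fun p ↦ by rw [hfst]) (fun p ↦ by rw [hsnd])
  rw [energy_comp_toQuarter hW hfst hsnd] at hc
  linarith [mul_le_mul_of_nonneg_left hfold hlam, energy_nonneg (W := W) ha hb]

theorem abs_sub_le_of_gradSq_le (hW : Differentiable ℝ W)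
    (hM : ∀ p ∈ Icc (-a) a ×ˢ Icc (-b) b, gradSq W p ≤ M) {x y : ℝ} (hx : x ∈ Icc (-a) a)
    (hy : y ∈ Icc (-b) b) : |W (x, y) - W 0| ≤ √M * (a + b) := by
  have hx0 : (0 : ℝ) ∈ Icc (-a) a := ⟨by linarith [hx.1, hx.2], by linarith [hx.1, hx.2]⟩
  have hy0 : (0 : ℝ) ∈ Icc (-b) b := ⟨by linarith [hy.1, hy.2], by linarith [hy.1, hy.2]⟩
  have hvertical : |W (x, y) - W (x, 0)| ≤ √M * |y - 0| :=
    (convex_Icc (-b) b).norm_image_sub_le_of_norm_hasDerivWithin_le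
      (fun t _ ↦ (hasDerivAt_partialSnd hW x t).hasDerivWithinAt)
      (fun t ht ↦ abs_le_sqrt ((le_add_of_nonneg_left (sq_nonneg _)).trans (hM (x, t) ⟨hx, ht⟩)))
      hy0 hy
  have hhorizontal : |W (x, 0) - W (0, 0)| ≤ √M * |x - 0| :=
    (convex_Icc (-a) a).norm_image_sub_le_of_norm_hasDerivWithin_le
      (fun s _ ↦ (hasDerivAt_partialFst hW s 0).hasDerivWithinAt)
      (fun s hs ↦ abs_le_sqrt ((le_add_of_nonneg_right (sq_nonneg _)).trans (hM (s, 0) ⟨hs, hy0⟩)))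
      hx0 hx
  rw [sub_zero] at hvertical hhorizontal
  calc |W (x, y) - W 0| ≤ |W (x, y) - W (x, 0)| + |W (x, 0) - W 0| := abs_sub_le _ _ _
    _ ≤ √M * |y| + √M * |x| := add_le_add hvertical hhorizontal
    _ ≤ √M * b + √M * a := by gcongr <;> exact abs_le.2 ‹_›
    _ = √M * (a + b) := by ring

theorem traceBound_of_gradSq_le (ha : 0 ≤ a) (hb : 0 ≤ b) (hlam : 0 ≤ lam) (hW : ContDiff ℝ 1 W)
    (hM : ∀ p ∈ Icc (-a) a ×ˢ Icc (-b) b, gradSq W p ≤ M) :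
    TraceBound a b lam (lam * (4 * (a + b) ^ 3) * M) W := by
  have hM0 : 0 ≤ M := (gradSq_nonneg W 0).trans (hM 0 ⟨by simp [ha], by simp [hb]⟩)
  have hcont := hW.continuous
  have hboundary : boundaryIntegral a b (fun p ↦ (W p - W 0) ^ 2) ≤
      4 * (a + b) * (√M * (a + b)) ^ 2 :=
    boundaryIntegral_le_of_forall_le ha hb (by fun_prop) fun p hp ↦
      sq_le_sq.2 ((abs_sub_le_of_gradSq_le (hW.differentiable one_ne_zero) hM hp.1 hp.2).trans
        (le_abs_self _))
  refine ⟨W 0, ?_⟩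
  calc lam * boundaryIntegral a b (fun p ↦ (W p - W 0) ^ 2)
      ≤ lam * (4 * (a + b) * (√M * (a + b)) ^ 2) := mul_le_mul_of_nonneg_left hboundary hlam
    _ = lam * (4 * (a + b) ^ 3) * M := by rw [mul_pow, sq_sqrt hM0]; ring
    _ ≤ energy a b W + lam * (4 * (a + b) ^ 3) * M := le_add_of_nonneg_left (energy_nonneg ha hb)

/-- One folding step halves the admissible error, because the quarter is similar to the whole
rectangle and the square of the gradient drops by a factor `4`. -/
theorem traceBound_pow_of_gradSq_le (ha : 0 < a) (hab : a ≤ b) (hk : 0 < k) (hkb : k * b < π)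
    (hlam : 0 ≤ lam) (htanh : lam ≤ k * tanh (k * a)) (hcot : lam ≤ k * cot (k * b)) (n : ℕ)
    (hW : ContDiff ℝ 1 W) (hM : ∀ p ∈ Icc (-a) a ×ˢ Icc (-b) b, gradSq W p ≤ M) :
    TraceBound a b lam (lam * (4 * (a + b) ^ 3) * M / 2 ^ n) W := by
  have hb : 0 ≤ b := ha.le.trans hab
  induction n generalizing W M with
  | zero => simpa using traceBound_of_gradSq_le ha.le hb hlam hW hM
  | succ n ih =>
    have hV : ContDiff ℝ 1 (doublyEvenPart W) := contDiff_doublyEvenPart hW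
    have hquarter : ∀ p ∈ Icc (-a) a ×ˢ Icc (-b) b,
        gradSq (fun q ↦ doublyEvenPart W (toQuarter a b q)) p ≤ M / 4 := fun p hp ↦ by
      rw [gradSq_comp_toQuarter (hV.differentiable one_ne_zero)]
      linarith [gradSq_doublyEvenPart_le hW hM (toQuarter_mem hp)]
    refine .of_doublyEvenPart ha hab hk hkb htanh hcot hW
      (.of_toQuarter ha.le hb hlam hV (doublyEvenPart_reflect_fst W)
        (doublyEvenPart_reflect_snd W) ?_)
    convert ih (W := fun p ↦ doublyEvenPart W (toQuarter a b p))
      (hV.comp (contDiff_toQuarter a b)) hquarter using 1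
    ring

theorem boundaryIntegral_sq_le_boundaryIntegral_sub_sq (ha : 0 ≤ a) (hb : 0 ≤ b)
    (hW : Continuous W) (hmean : boundaryIntegral a b W = 0) (c : ℝ) :
    boundaryIntegral a b (fun p ↦ W p ^ 2) ≤ boundaryIntegral a b (fun p ↦ (W p - c) ^ 2) := by
  have hexpand : ∀ p, (W p - c) ^ 2 = W p ^ 2 + (-2 * c * W p + c ^ 2) := fun p ↦ by ring
  rw [funext hexpand, boundaryIntegral_add (by fun_prop) (by fun_prop),
    boundaryIntegral_add (by fun_prop) (by fun_prop), boundaryIntegral_const_mul, hmean,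
    boundaryIntegral_const, mul_zero, zero_add]
  exact le_add_of_nonneg_right (by positivity)

theorem mul_boundaryIntegral_sq_le_energy (ha : 0 < a) (hab : a ≤ b) (hk : 0 < k)
    (hkb : k * b < π) (hlam : 0 ≤ lam) (htanh : lam ≤ k * tanh (k * a))
    (hcot : lam ≤ k * cot (k * b)) (hW : ContDiff ℝ 1 W) (hmean : boundaryIntegral a b W = 0) :
    lam * boundaryIntegral a b (fun p ↦ W p ^ 2) ≤ energy a b W := by
  obtain ⟨M, hM⟩ := (isCompact_Icc.prod isCompact_Icc).bddAbove_image
    (continuous_gradSq hW).continuousOn (K := Icc (-a) a ×ˢ Icc (-b) b)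
  have hgrad : ∀ p ∈ Icc (-a) a ×ˢ Icc (-b) b, gradSq W p ≤ M := fun p hp ↦
    hM (mem_image_of_mem _ hp)
  have hlim : Tendsto (fun n : ℕ ↦ energy a b W + lam * (4 * (a + b) ^ 3) * M / 2 ^ n) atTop
      (𝓝 (energy a b W)) := by
    simpa using tendsto_const_nhds.add (tendsto_const_nhds.div_atTop
      (tendsto_pow_atTop_atTop_of_one_lt (one_lt_two (α := ℝ))))
  refine ge_of_tendsto' hlim fun n ↦ ?_
  obtain ⟨c, hc⟩ := traceBound_pow_of_gradSq_le ha hab hk hkb hlam htanh hcot n hW hgrad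
  exact (mul_le_mul_of_nonneg_left (boundaryIntegral_sq_le_boundaryIntegral_sub_sq ha.le
    (ha.le.trans hab) hW.continuous hmean c) hlam).trans hc

end TraceBound

section Extremal

variable {a b k lam : ℝ} {G W : ℝ × ℝ → ℝ}

theorem rectIntegral_partialSnd (hG : ContDiff ℝ 1 G) :
    rectIntegral a b (partialSnd G) = ∫ x in (-a)..a, (G (x, b) - G (x, -b)) := by
  have hcont := continuous_partialSnd hG
  unfold rectIntegral
  congr with x
  exact intervalIntegral.integral_eq_sub_of_hasDerivAt
    (fun y _ ↦ hasDerivAt_partialSnd (hG.differentiable one_ne_zero) x y)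
    (Continuous.intervalIntegrable (by fun_prop) _ _)

theorem rectIntegral_partialFst (hG : ContDiff ℝ 1 G) :
    rectIntegral a b (partialFst G) = ∫ y in (-b)..b, (G (a, y) - G (-a, y)) := by
  rw [← rectIntegral_swap (continuous_partialFst hG)]
  exact rectIntegral_partialSnd (contDiff_comp_swap hG)

theorem gradSq_eq_divergence_of_harmonic (hW : ContDiff ℝ 2 W)
    (hharmonic : ∀ p, partialFst (partialFst W) p + partialSnd (partialSnd W) p = 0)
    (p : ℝ × ℝ) :
    gradSq W p = partialFst (fun q ↦ W q * partialFst W q) p +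
      partialSnd (fun q ↦ W q * partialSnd W q) p := by
  have hdiff := hW.differentiable two_ne_zero
  have hfst : partialFst (fun q ↦ W q * partialFst W q) p =
      partialFst W p * partialFst W p + W p * partialFst (partialFst W) p :=
    ((hasDerivAt_partialFst hdiff p.1 p.2).mul (hasDerivAt_partialFst
      ((contDiff_partialFst (n := 1) hW).differentiable one_ne_zero) p.1 p.2)).deriv
  have hsnd : partialSnd (fun q ↦ W q * partialSnd W q) p =
      partialSnd W p * partialSnd W p + W p * partialSnd (partialSnd W) p :=
    ((hasDerivAt_partialSnd hdiff p.1 p.2).mul (hasDerivAt_partialSnd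
      ((contDiff_partialSnd (n := 1) hW).differentiable one_ne_zero) p.1 p.2)).deriv
  rw [hfst, hsnd, gradSq]
  linear_combination -W p * hharmonic p

/-- Green's identity for a Steklov eigenfunction. -/
theorem energy_eq_mul_boundaryIntegral_sq (hW : ContDiff ℝ 2 W)
    (hharmonic : ∀ p, partialFst (partialFst W) p + partialSnd (partialSnd W) p = 0)
    (hright : ∀ y, partialFst W (a, y) = lam * W (a, y))
    (hleft : ∀ y, partialFst W (-a, y) = -(lam * W (-a, y)))
    (htop : ∀ x, partialSnd W (x, b) = lam * W (x, b))
    (hbottom : ∀ x, partialSnd W (x, -b) = -(lam * W (x, -b))) :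
    energy a b W = lam * boundaryIntegral a b (fun p ↦ W p ^ 2) := by
  have hW1 : ContDiff ℝ 1 W := hW.of_le one_le_two
  have hflux_fst : ContDiff ℝ 1 fun q ↦ W q * partialFst W q :=
    hW1.mul (contDiff_partialFst hW)
  have hflux_snd : ContDiff ℝ 1 fun q ↦ W q * partialSnd W q :=
    hW1.mul (contDiff_partialSnd hW)
  rw [energy, funext (gradSq_eq_divergence_of_harmonic hW hharmonic),
    rectIntegral_add (continuous_partialFst hflux_fst) (continuous_partialSnd hflux_snd),
    rectIntegral_partialFst hflux_fst, rectIntegral_partialSnd hflux_snd, boundaryIntegral, mul_add,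
    ← intervalIntegral.integral_const_mul, ← intervalIntegral.integral_const_mul]
  simp only [hright, hleft, htop, hbottom]
  congr! 3 <;> ring

/-- The candidate `cosh (k * x) * sin (k * y)` for an extremal of the trace inequality. -/
noncomputable def coshSin (k : ℝ) (p : ℝ × ℝ) : ℝ :=
  cosh (k * p.1) * sin (k * p.2)

theorem contDiff_coshSin (k : ℝ) {n : WithTop ℕ∞} : ContDiff ℝ n (coshSin k) := by
  unfold coshSin
  fun_prop

theorem partialFst_coshSin (k : ℝ) :
    partialFst (coshSin k) = fun p ↦ k * sinh (k * p.1) * sin (k * p.2) := by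
  funext p
  exact ((hasDerivAt_const_mul k).cosh.mul_const (sin (k * p.2))).deriv.trans (by ring)

theorem partialSnd_coshSin (k : ℝ) :
    partialSnd (coshSin k) = fun p ↦ k * cosh (k * p.1) * cos (k * p.2) := by
  funext p
  exact ((hasDerivAt_const_mul k).sin.const_mul (cosh (k * p.1))).deriv.trans (by ring)

theorem coshSin_harmonic (k : ℝ) (p : ℝ × ℝ) :
    partialFst (partialFst (coshSin k)) p + partialSnd (partialSnd (coshSin k)) p = 0 := by
  have hfst : partialFst (partialFst (coshSin k)) p =
      k * (cosh (k * p.1) * k) * sin (k * p.2) := by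
    rw [partialFst_coshSin]
    exact (((hasDerivAt_const_mul k).sinh.const_mul k).mul_const (sin (k * p.2))).deriv
  have hsnd : partialSnd (partialSnd (coshSin k)) p =
      k * cosh (k * p.1) * (-sin (k * p.2) * k) := by
    rw [partialSnd_coshSin]
    exact ((hasDerivAt_const_mul k).cos.const_mul (k * cosh (k * p.1))).deriv
  rw [hfst, hsnd]
  ring

theorem energy_coshSin (hsin : sin (k * b) ≠ 0) (hroot : tanh (k * a) = cot (k * b)) :
    energy a b (coshSin k) =
      k * tanh (k * a) * boundaryIntegral a b (fun p ↦ coshSin k p ^ 2) := by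
  have hsinh : sinh (k * a) = tanh (k * a) * cosh (k * a) := by
    rw [tanh_eq_sinh_div_cosh, div_mul_cancel₀ _ (cosh_pos _).ne']
  have hcos : cos (k * b) = tanh (k * a) * sin (k * b) := by
    rw [hroot, cot_eq_cos_div_sin, div_mul_cancel₀ _ hsin]
  refine energy_eq_mul_boundaryIntegral_sq (contDiff_coshSin k) (coshSin_harmonic k)
    (fun y ↦ ?_) (fun y ↦ ?_) (fun x ↦ ?_) fun x ↦ ?_ <;>
  simp only [partialFst_coshSin, partialSnd_coshSin, coshSin, mul_neg, sinh_neg, cosh_neg,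
    sin_neg, cos_neg, hsinh, hcos] <;>
  ring

theorem boundaryIntegral_coshSin (a b k : ℝ) : boundaryIntegral a b (coshSin k) = 0 :=
  boundaryIntegral_eq_zero_of_odd fun p ↦ by simp [coshSin]

theorem boundaryIntegral_coshSin_sq_pos (ha : 0 < a) (hb : 0 ≤ b) (hsin : sin (k * b) ≠ 0) :
    0 < boundaryIntegral a b (fun p ↦ coshSin k p ^ 2) := by
  have hcont := (contDiff_coshSin k (n := 0)).continuous
  refine add_pos_of_nonneg_of_pos
    (intervalIntegral.integral_nonneg (by linarith) fun t _ ↦ by positivity)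
    (intervalIntegral.intervalIntegral_pos_of_pos
      (Continuous.intervalIntegrable (by fun_prop) _ _) (fun s ↦ ?_) (by linarith))
  have htop : coshSin k (s, b) ≠ 0 := mul_ne_zero (cosh_pos _).ne' hsin
  positivity

end Extremal

section Plane

variable {a b : ℝ} {w : EuclideanSpace ℝ (Fin 2) → ℝ}

/-- The identification of `ℝ × ℝ` with the Euclidean plane; `planeEquiv p` is `!₂[p.1, p.2]` by
definition. -/
noncomputable def planeEquiv : (ℝ × ℝ) ≃L[ℝ] EuclideanSpace ℝ (Fin 2) :=
  (ContinuousLinearEquiv.finTwoArrow ℝ ℝ).symm.trans (EuclideanSpace.equiv (Fin 2) ℝ).symm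

theorem measurePreserving_planeEquiv : MeasurePreserving planeEquiv :=
  (PiLp.volume_preserving_toLp (Fin 2)).comp (volume_preserving_finTwoArrow ℝ).symm

theorem gradSq_comp_planeEquiv (hw : Differentiable ℝ w) (p : ℝ × ℝ) :
    gradSq (fun q ↦ w (planeEquiv q)) p = ‖gradient w (planeEquiv p)‖ ^ 2 := by
  have hinner : ∀ v, fderiv ℝ (fun q ↦ w (planeEquiv q)) p v =
      inner ℝ (gradient w (planeEquiv p)) (planeEquiv v) := fun v ↦ by
    rw [gradient, InnerProductSpace.toDual_symm_apply]
    exact DFunLike.congr_fun planeEquiv.comp_right_fderiv v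
  have hdiff : Differentiable ℝ fun q ↦ w (planeEquiv q) := hw.comp planeEquiv.differentiable
  rw [gradSq, partialFst_eq_fderiv hdiff, partialSnd_eq_fderiv hdiff, hinner, hinner,
    EuclideanSpace.real_norm_sq_eq]
  generalize gradient w (planeEquiv p) = v
  simp [planeEquiv, PiLp.inner_apply, Fin.sum_univ_two]

theorem setIntegral_eq_rectIntegral (ha : 0 ≤ a) (hb : 0 ≤ b) {g : EuclideanSpace ℝ (Fin 2) → ℝ}
    (hg : Continuous g) :
    ∫ x in {x : EuclideanSpace ℝ (Fin 2) | x 0 ∈ Ioo (-a) a ∧ x 1 ∈ Ioo (-b) b}, g x =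
      rectIntegral a b (fun p ↦ g (planeEquiv p)) := by
  have hcont : Continuous fun p ↦ g (planeEquiv p) := hg.comp planeEquiv.continuous
  have hintegrable : IntegrableOn (fun p ↦ g (planeEquiv p)) (Ioo (-a) a ×ˢ Ioo (-b) b) :=
    (hcont.continuousOn.integrableOn_compact (isCompact_Icc.prod isCompact_Icc)).mono_set
      (prod_mono Ioo_subset_Icc_self Ioo_subset_Icc_self)
  calc ∫ x in {x : EuclideanSpace ℝ (Fin 2) | x 0 ∈ Ioo (-a) a ∧ x 1 ∈ Ioo (-b) b}, g x
      = ∫ p in Ioo (-a) a ×ˢ Ioo (-b) b, g (planeEquiv p) :=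
        (measurePreserving_planeEquiv.setIntegral_preimage_emb
          planeEquiv.toHomeomorph.measurableEmbedding g _).symm
    _ = ∫ x in Ioo (-a) a, ∫ y in Ioo (-b) b, g (planeEquiv (x, y)) :=
        setIntegral_prod _ hintegrable
    _ = rectIntegral a b (fun p ↦ g (planeEquiv p)) := by
        simp only [rectIntegral, intervalIntegral.integral_of_le (neg_le_self ha),
          intervalIntegral.integral_of_le (neg_le_self hb), integral_Ioc_eq_integral_Ioo]

theorem setIntegral_norm_gradient_sq_eq_energy (ha : 0 ≤ a) (hb : 0 ≤ b) (hw : ContDiff ℝ 1 w) :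
    ∫ x in {x : EuclideanSpace ℝ (Fin 2) | x 0 ∈ Ioo (-a) a ∧ x 1 ∈ Ioo (-b) b},
      ‖gradient w x‖ ^ 2 = energy a b (fun p ↦ w (planeEquiv p)) := by
  have hgradient : Continuous (gradient w) :=
    (InnerProductSpace.toDual ℝ _).symm.continuous.comp (hw.continuous_fderiv one_ne_zero)
  rw [setIntegral_eq_rectIntegral ha hb (by fun_prop), energy,
    funext (gradSq_comp_planeEquiv (hw.differentiable one_ne_zero))]

/-- The constants `C` for which the trace inequality `‖w‖_{L²(Γ)} ≤ C ‖∇w‖_{L²(Ω)}` holds for all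
`C¹` functions with zero mean on `Γ`, where `Γ` is the boundary of
`Ω = (-a, a) × (-b, b)`. -/
def traceConstants (a b : ℝ) : Set ℝ :=
  {C : ℝ | ∀ w : EuclideanSpace ℝ (Fin 2) → ℝ, ContDiff ℝ 1 w →
    (∫ t in (-b)..b, (w !₂[-a, t] + w !₂[a, t])) +
      (∫ s in (-a)..a, (w !₂[s, -b] + w !₂[s, b])) = 0 →
    √((∫ t in (-b)..b, (w !₂[-a, t] ^ 2 + w !₂[a, t] ^ 2)) +
      (∫ s in (-a)..a, (w !₂[s, -b] ^ 2 + w !₂[s, b] ^ 2))) ≤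
    C * √(∫ x in {x : EuclideanSpace ℝ (Fin 2) | x 0 ∈ Ioo (-a) a ∧ x 1 ∈ Ioo (-b) b},
      ‖gradient w x‖ ^ 2)}

theorem mem_traceConstants_iff (ha : 0 ≤ a) (hb : 0 ≤ b) {C : ℝ} :
    C ∈ traceConstants a b ↔ ∀ W : ℝ × ℝ → ℝ, ContDiff ℝ 1 W → boundaryIntegral a b W = 0 →
      √(boundaryIntegral a b (fun p ↦ W p ^ 2)) ≤ C * √(energy a b W) := by
  constructor
  · intro hC W hW hmean
    have hw : ContDiff ℝ 1 fun x ↦ W (planeEquiv.symm x) := hW.comp planeEquiv.symm.contDiff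
    have h := hC _ hw hmean
    rw [setIntegral_norm_gradient_sq_eq_energy ha hb hw] at h
    simp only [ContinuousLinearEquiv.symm_apply_apply] at h
    exact h
  · intro hC w hw hmean
    rw [setIntegral_norm_gradient_sq_eq_energy ha hb hw]
    exact hC _ (hw.comp planeEquiv.contDiff) hmean

theorem traceConstants_subset_swap (ha : 0 ≤ a) (hb : 0 ≤ b) :
    traceConstants a b ⊆ traceConstants b a := by
  intro C hC
  rw [mem_traceConstants_iff hb ha]
  intro W hW hmean
  have h := (mem_traceConstants_iff ha hb).1 hC _ (contDiff_comp_swap hW)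
    (boundaryIntegral_swap.trans hmean)
  rwa [energy_swap hW, boundaryIntegral_swap (G := fun p ↦ W p ^ 2)] at h

theorem traceConstants_comm (ha : 0 ≤ a) (hb : 0 ≤ b) :
    traceConstants a b = traceConstants b a :=
  (traceConstants_subset_swap ha hb).antisymm (traceConstants_subset_swap hb ha)

end Plane

section SharpConstant

variable {a b k : ℝ}

theorem isLeast_traceConstants (ha : 0 < a) (hab : a ≤ b) (hk : 0 < k) (hkb : k * b < π)
    (hroot : tanh (k * a) = cot (k * b)) :
    IsLeast (traceConstants a b) (1 / √(k * tanh (k * a))) := by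
  have hb : 0 < b := ha.trans_le hab
  have hlam : 0 < k * tanh (k * a) := mul_pos hk (tanh_pos (mul_pos hk ha))
  have hsin : sin (k * b) ≠ 0 := (sin_pos_of_pos_of_lt_pi (mul_pos hk hb) hkb).ne'
  constructor
  · rw [mem_traceConstants_iff ha.le hb.le]
    intro W hW hmean
    rw [one_div_mul_eq_div, ← sqrt_div' _ hlam.le]
    refine sqrt_le_sqrt ((le_div_iff₀' hlam).2 ?_)
    exact mul_boundaryIntegral_sq_le_energy ha hab hk hkb hlam.le le_rfl (by rw [hroot]) hW hmean
  · intro C hC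
    have h := (mem_traceConstants_iff ha.le hb.le).1 hC _ (contDiff_coshSin k)
      (boundaryIntegral_coshSin a b k)
    rw [energy_coshSin hsin hroot, sqrt_mul hlam.le, ← mul_assoc] at h
    rw [div_le_iff₀ (sqrt_pos.2 hlam)]
    exact (le_mul_iff_one_le_left
      (sqrt_pos.2 (boundaryIntegral_coshSin_sq_pos ha hb.le hsin))).1 h

/-- The substitution `k = 2 * z / √(h₁ * h₂)` turns `z / α` and `z * α` into `k * (h₁ / 2)` and
`k * (h₂ / 2)`. -/
theorem isLeast_traceConstants_of_root {h₁ h₂ α z : ℝ} (hh₁ : 0 < h₁) (hle : h₁ ≤ h₂)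
    (hα : α = √(h₂ / h₁)) (hpos : 0 < z * α) (hlt : z * α < π)
    (hroot : tanh (z / α) * tan (z * α) = 1) :
    IsLeast (traceConstants (h₁ / 2) (h₂ / 2)) (1 / √(2 * z / √(h₁ * h₂) * tanh (z / α))) := by
  have hh₂ : 0 < h₂ := hh₁.trans_le hle
  have hsqrt₁ := sqrt_pos.2 hh₁
  have hsqrt₂ := sqrt_pos.2 hh₂
  have hα_eq : α = √h₂ / √h₁ := by rw [hα, sqrt_div hh₂.le]
  have hα_pos : 0 < α := hα_eq ▸ div_pos hsqrt₂ hsqrt₁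
  have hz : 0 < z := pos_of_mul_pos_left hpos hα_pos.le
  have harg₁ : 2 * z / √(h₁ * h₂) * (h₁ / 2) = z / α := by
    rw [hα_eq, sqrt_mul hh₁.le]
    field_simp
    rw [sq_sqrt hh₁.le]
  have harg₂ : 2 * z / √(h₁ * h₂) * (h₂ / 2) = z * α := by
    rw [hα_eq, sqrt_mul hh₁.le]
    field_simp
    rw [sq_sqrt hh₂.le]
  have hcot : tanh (z / α) = cot (z * α) := by
    rw [eq_inv_of_mul_eq_one_left hroot, tan_inv_eq_cot]
  rw [← harg₁]
  refine isLeast_traceConstants (half_pos hh₁) (by linarith) (by positivity) ?_ ?_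
  · rwa [harg₂]
  · rwa [harg₁, harg₂]

end SharpConstant

end

/-- The sharp constant `C₂(Ω,Γ)` in `‖w‖_{L²(Γ)} ≤ C₂ ‖∇w‖_{L²(Ω)}` for functions
with zero mean trace on `Γ`, where `Ω = (−h₁/2,h₁/2) × (−h₂/2,h₂/2)` and
`Γ = ∂Ω` is the whole boundary of the rectangle. Here `z₀ α` is, for every `α > 0`,
the unique root of `tanh(z/α)·tan(zα) = 1` with `0 < z₀(α)·α < π/2`, and
`α₀ = √(max{h₁,h₂}/min{h₁,h₂})`. The sharp constant equals
`((2 z₀(α₀)/√(h₁h₂)) · tanh(z₀(α₀)/α₀))^(-1/2)`. -/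
theorem rectangle_whole_boundary_C2 (h₁ h₂ : ℝ) (hh₁ : 0 < h₁) (hh₂ : 0 < h₂)
    (z₀ : ℝ → ℝ)
    (hz₀ : ∀ α : ℝ, 0 < α →
      (0 < z₀ α * α ∧ z₀ α * α < π / 2 ∧
        Real.tanh (z₀ α / α) * Real.tan (z₀ α * α) = 1) ∧
      (∀ z : ℝ, 0 < z * α → z * α < π / 2 →
        Real.tanh (z / α) * Real.tan (z * α) = 1 → z = z₀ α))
    (α₀ : ℝ) (hα₀ : α₀ = Real.sqrt (max h₁ h₂ / min h₁ h₂)) :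
    IsLeast {C : ℝ |
      ∀ w : EuclideanSpace ℝ (Fin 2) → ℝ, ContDiff ℝ 1 w →
        ((∫ t in (-(h₂/2))..(h₂/2), (w !₂[-(h₁/2), t] + w !₂[h₁/2, t])) +
         (∫ s in (-(h₁/2))..(h₁/2), (w !₂[s, -(h₂/2)] + w !₂[s, h₂/2]))) = 0 →
        Real.sqrt ((∫ t in (-(h₂/2))..(h₂/2),
              ((w !₂[-(h₁/2), t]) ^ 2 + (w !₂[h₁/2, t]) ^ 2)) +
            (∫ s in (-(h₁/2))..(h₁/2),
              ((w !₂[s, -(h₂/2)]) ^ 2 + (w !₂[s, h₂/2]) ^ 2))) ≤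
          C * Real.sqrt (∫ x in {x : EuclideanSpace ℝ (Fin 2) |
            x 0 ∈ Set.Ioo (-(h₁/2)) (h₁/2) ∧ x 1 ∈ Set.Ioo (-(h₂/2)) (h₂/2)},
            ‖gradient w x‖ ^ 2)}
      (1 / Real.sqrt ((2 * z₀ α₀ / Real.sqrt (h₁ * h₂)) *
        Real.tanh (z₀ α₀ / α₀))) := by
  have hα₀_pos : 0 < α₀ := hα₀ ▸ sqrt_pos.2 (div_pos (lt_max_of_lt_left hh₁) (lt_min hh₁ hh₂))
  obtain ⟨⟨hpos, hlt, hroot⟩, -⟩ := hz₀ α₀ hα₀_pos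
  have hlt_pi : z₀ α₀ * α₀ < π := hlt.trans (half_lt_self pi_pos)
  change IsLeast (traceConstants (h₁ / 2) (h₂ / 2)) _
  rcases le_total h₁ h₂ with hle | hle
  · rw [max_eq_right hle, min_eq_left hle] at hα₀
    exact isLeast_traceConstants_of_root hh₁ hle hα₀ hpos hlt_pi hroot
  · rw [max_eq_left hle, min_eq_right hle] at hα₀
    rw [traceConstants_comm (half_pos hh₁).le (half_pos hh₂).le, mul_comm h₁]
    exact isLeast_traceConstants_of_root hh₂ hle hα₀ hpos hlt_pi hroot
end

section
/- Let Ω = {(x₁,x₂) ∈ ℝ² : 0 < x₂ < x₁ < h} be an isosceles right triangle with legs of length h > 0, and let Γ = {x₁ = h, x₂ ∈ [0,h]} be one leg. Let z̃₀ be the unique root of the equation z·cot(z) + 1 = 0 in the interval (0,π) (z̃₀ ≈ 2.02876). Then the sharp constant C₁(Ω,Γ) in the inequality ‖w‖_{L²(Ω)} ≤ C₁‖∇w‖_{L²(Ω)} for all w ∈ H̃¹(Ω,Γ) is equal to h/z̃₀. -/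
open MeasureTheory Real

/-!
Put `k = z₀ / h` and use the uniform probability measure on `(0, h)`. Picone's inequality bounds
`k² ∫ F²` by `∫ F'²` up to a boundary term when `F 0 = 0`; applied to a primitive of `u` it gives,
by duality, `k² (Var u - 2 u(h) E u) ≤ E u'²`, where `kh cot (kh) = -1` is what makes the variance
appear.

Reflection across the diagonal turns `w` into a symmetric function `W` on the square, the energy
`∫ |∇w|²` over the triangle becoming `∫ (∂₁W)²` over the square. Averaging the one-dimensional
inequality, for suitably shifted slices of `W`, and using that `W` has mean zero on the side
`x₁ = h` gives `k² (E Var₁ W + (E W)² / 2) ≤ E (∂₁W)²`. The Efron–Stein inequality reads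
`Var W ≤ 2 E Var₁ W` for symmetric `W`, so `k² E W² ≤ 2 E (∂₁W)²`, which is the claim. Equality
holds for `cos (k x₁) + cos (k x₂)`.
-/

open ProbabilityTheory Set Filter Topology

section Picone

theorem continuousAt_sq_div {f g : ℝ → ℝ} {f' g' a : ℝ} (hf : HasDerivAt f f' a)
    (hg : HasDerivAt g g' a) (hfa : f a = 0) (hga : g a = 0) (hg' : g' ≠ 0) :
    ContinuousAt (fun x => f x ^ 2 / g x) a := by
  have hlim : Tendsto (fun x => f x * (slope f a x / slope g a x)) (𝓝[≠] a)
      (𝓝 (f a * (f' / g'))) :=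
    (hf.continuousAt.tendsto.mono_left nhdsWithin_le_nhds).mul
      ((hasDerivAt_iff_tendsto_slope.1 hf).div (hasDerivAt_iff_tendsto_slope.1 hg) hg')
  rw [continuousAt_iff_punctured_nhds]
  simp only [hfa, zero_mul, ne_eq, OfNat.ofNat_ne_zero, not_false_eq_true, zero_pow,
    zero_div] at hlim ⊢
  refine hlim.congr' ?_
  filter_upwards [self_mem_nhdsWithin] with x hx
  have hxa : x - a ≠ 0 := sub_ne_zero.2 hx
  rw [slope_def_field, slope_def_field, hfa, hga, sub_zero, sub_zero, div_div_div_cancel_right₀ hxa]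
  ring

theorem hasDerivAt_sin_const_mul (k x : ℝ) :
    HasDerivAt (fun x => sin (k * x)) (k * cos (k * x)) x := by
  simpa [mul_comm] using ((hasDerivAt_id x).const_mul k).sin

theorem hasDerivAt_cos_const_mul (k x : ℝ) :
    HasDerivAt (fun x => cos (k * x)) (-(k * sin (k * x))) x := by
  simpa [mul_comm] using ((hasDerivAt_id x).const_mul k).cos

theorem hasDerivAt_cot_const_mul {k x : ℝ} (hx : sin (k * x) ≠ 0) :
    HasDerivAt (fun x => cot (k * x)) (-(k * (1 + cot (k * x) ^ 2))) x := by
  simp only [cot_eq_cos_div_sin]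
  refine ((hasDerivAt_cos_const_mul k x).fun_div (hasDerivAt_sin_const_mul k x) hx).congr_deriv ?_
  field_simp
  ring

variable {h k : ℝ} {F f : ℝ → ℝ}

theorem continuousOn_sq_mul_cot (hk : 0 < k) (hkh : k * h < π)
    (hF : ∀ x, HasDerivAt F (f x) x) (hF0 : F 0 = 0) :
    ContinuousOn (fun x => F x ^ 2 * cot (k * x)) (Icc 0 h) := by
  have hquot : ContinuousOn (fun x => F x ^ 2 / sin (k * x)) (Icc 0 h) := by
    rintro x ⟨hx0, hxh⟩
    refine ContinuousAt.continuousWithinAt ?_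
    rcases hx0.eq_or_lt with rfl | hx0
    · exact continuousAt_sq_div (hF 0) (hasDerivAt_sin_const_mul k 0) hF0 (by simp)
        (by simpa using hk.ne')
    · have hsin : 0 < sin (k * x) := sin_pos_of_pos_of_lt_pi (by positivity)
        ((mul_le_mul_of_nonneg_left hxh hk.le).trans_lt hkh)
      exact ((hF x).continuousAt.pow 2).div (by fun_prop) hsin.ne'
  have hcos : ContinuousOn (fun x => cos (k * x)) (Icc 0 h) := by fun_prop
  refine (hquot.fun_mul hcos).congr fun x _ => ?_
  simp only [cot_eq_cos_div_sin]
  ring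

-- Picone's identity: `(k F² cot (k x))' = F'² - k² F² - (F' - k F cot (k x))²`.
theorem sq_mul_integral_sq_add_cot_le (hh : 0 ≤ h) (hk : 0 < k) (hkh : k * h < π)
    (hf : Continuous f) (hF : ∀ x, HasDerivAt F (f x) x) (hF0 : F 0 = 0) :
    k ^ 2 * (∫ x in 0..h, F x ^ 2) + k * cot (k * h) * F h ^ 2 ≤ ∫ x in 0..h, f x ^ 2 := by
  have hFc : Continuous F := continuous_iff_continuousAt.2 fun x => (hF x).continuousAt
  have hderiv : ∀ x ∈ Ioo 0 h, HasDerivAt (fun x => k * (F x ^ 2 * cot (k * x)))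
      (f x ^ 2 - k ^ 2 * F x ^ 2 - (f x - k * F x * cot (k * x)) ^ 2) x := fun x hx => by
    have hsin : 0 < sin (k * x) := sin_pos_of_pos_of_lt_pi (mul_pos hk hx.1)
      ((mul_le_mul_of_nonneg_left hx.2.le hk.le).trans_lt hkh)
    have hprod := ((hF x).fun_pow 2).fun_mul (hasDerivAt_cot_const_mul hsin.ne')
    refine (hprod.const_mul k).congr_deriv ?_
    push_cast
    ring
  have hf2 : Continuous fun x => f x ^ 2 := by fun_prop
  have hF2 : Continuous fun x => k ^ 2 * F x ^ 2 := by fun_prop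
  have hmono := intervalIntegral.sub_le_integral_of_hasDeriv_right_of_le hh
    ((continuousOn_sq_mul_cot hk hkh hF hF0).const_mul k)
    (fun x hx => (hderiv x hx).hasDerivWithinAt)
    (hf2.fun_sub hF2).integrableOn_Icc (fun x _ => sub_le_self _ (sq_nonneg _))
  rw [intervalIntegral.integral_sub (hf2.intervalIntegrable _ _) (hF2.intervalIntegrable _ _),
    intervalIntegral.integral_const_mul] at hmono
  simp only [hF0] at hmono
  linarith

variable {u p : ℝ → ℝ} {s : Set ℝ}

theorem integral_mul_primitive_eq (hu : Continuous u) (hs : s.Countable)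
    (hup : ∀ x ∉ s, HasDerivAt u (p x) x) (hp : IntervalIntegrable p volume 0 h) :
    ∫ x in 0..h, p x * ∫ t in 0..x, u t = u h * (∫ x in 0..h, u x) - ∫ x in 0..h, u x ^ 2 := by
  set U : ℝ → ℝ := fun x => ∫ t in 0..x, u t
  have hU : ∀ x, HasDerivAt U (u x) x := fun x => hu.integral_hasStrictDerivAt 0 x |>.hasDerivAt
  have hUc : Continuous U := continuous_iff_continuousAt.2 fun x => (hU x).continuousAt
  have hpU : IntervalIntegrable (fun x => p x * U x) volume 0 h :=
    hp.mul_continuousOn hUc.continuousOn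
  have huu : IntervalIntegrable (fun x => u x * u x) volume 0 h :=
    (hu.mul hu).intervalIntegrable _ _
  have hparts := integral_eq_of_hasDerivAt_off_countable (fun x => u x * U x)
    (fun x => p x * U x + u x * u x) hs (hu.mul hUc).continuousOn
    (fun x hx => (hup x hx.2).fun_mul (hU x)) (hpU.add huu)
  rw [intervalIntegral.integral_add hpU huu] at hparts
  simp only [U, intervalIntegral.integral_same, mul_zero, sub_zero] at hparts
  simp only [sq]
  linarith

theorem sq_mul_integral_sq_sub_le_integral_deriv_sq (hh : 0 ≤ h) (hk : 0 < k) (hkh : k * h < π)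
    (hu : Continuous u) (hs : s.Countable) (hup : ∀ x ∉ s, HasDerivAt u (p x) x)
    (hp : IntervalIntegrable p volume 0 h)
    (hp2 : IntervalIntegrable (fun x => p x ^ 2) volume 0 h) :
    k ^ 2 * ((∫ x in 0..h, u x ^ 2) - 2 * u h * (∫ x in 0..h, u x)
      + k * cot (k * h) * (∫ x in 0..h, u x) ^ 2) ≤ ∫ x in 0..h, p x ^ 2 := by
  set U : ℝ → ℝ := fun x => ∫ t in 0..x, u t with hUdef
  have hU : ∀ x, HasDerivAt U (u x) x := fun x => hu.integral_hasStrictDerivAt 0 x |>.hasDerivAt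
  have hUc : Continuous U := continuous_iff_continuousAt.2 fun x => (hU x).continuousAt
  have hpU : IntervalIntegrable (fun x => p x * U x) volume 0 h :=
    hp.mul_continuousOn hUc.continuousOn
  have hU2 : IntervalIntegrable (fun x => U x ^ 2) volume 0 h :=
    (hUc.pow 2).intervalIntegrable _ _
  have hpicone := sq_mul_integral_sq_add_cot_le hh hk hkh hu hU (by simp [hUdef])
  have hparts := integral_mul_primitive_eq hu hs hup hp
  have hsquare : 0 ≤ (∫ x in 0..h, p x ^ 2) + 2 * k ^ 2 * (∫ x in 0..h, p x * U x)
      + k ^ 4 * ∫ x in 0..h, U x ^ 2 := calc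
    0 ≤ ∫ x in 0..h, (p x + k ^ 2 * U x) ^ 2 :=
      intervalIntegral.integral_nonneg hh fun x _ => sq_nonneg _
    _ = ∫ x in 0..h, (p x ^ 2 + 2 * k ^ 2 * (p x * U x) + k ^ 4 * U x ^ 2) := by
      congr with x
      ring
    _ = _ := by
      rw [intervalIntegral.integral_add (hp2.add (hpU.const_mul _))
          (hU2.const_mul _),
        intervalIntegral.integral_add hp2 (hpU.const_mul _),
        intervalIntegral.integral_const_mul, intervalIntegral.integral_const_mul]
  have hscaled := mul_le_mul_of_nonneg_left hpicone (sq_nonneg k)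
  simp only [hUdef] at hparts hsquare hscaled
  rw [hparts] at hsquare
  linarith

end Picone

section EfronStein

variable {α β : Type*} [MeasurableSpace α] [MeasurableSpace β] {μ : Measure α} {ν : Measure β}
  {W : α × β → ℝ}

theorem sq_integral_le_integral_sq [IsProbabilityMeasure μ] {f : α → ℝ} (hf : MemLp f 2 μ) :
    (∫ x, f x ∂μ) ^ 2 ≤ ∫ x, f x ^ 2 ∂μ :=
  sub_nonneg.1 ((variance_nonneg f μ).trans_eq (variance_eq_sub hf))

theorem ae_memLp_two_prodMk_left [SFinite μ] [SFinite ν] (hW : MemLp W 2 (μ.prod ν)) :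
    ∀ᵐ x ∂μ, MemLp (fun y => W (x, y)) 2 ν := by
  filter_upwards [hW.aestronglyMeasurable.prodMk_left, hW.integrable_sq.prod_right_ae]
    with x hmeas hsq
  exact (memLp_two_iff_integrable_sq hmeas).2 hsq

theorem ae_memLp_two_prodMk_right [SFinite μ] [SFinite ν] (hW : MemLp W 2 (μ.prod ν)) :
    ∀ᵐ y ∂ν, MemLp (fun x => W (x, y)) 2 μ :=
  ae_memLp_two_prodMk_left (hW.comp_measurePreserving Measure.measurePreserving_swap)

variable [IsProbabilityMeasure μ] [IsProbabilityMeasure ν]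

theorem memLp_two_integral_prodMk_right (hW : MemLp W 2 (μ.prod ν)) :
    MemLp (fun y => ∫ x, W (x, y) ∂μ) 2 ν := by
  have hWi : Integrable W (μ.prod ν) := hW.integrable one_le_two
  have hmeas := hWi.integral_prod_right.aestronglyMeasurable
  refine (memLp_two_iff_integrable_sq hmeas).2
    (hW.integrable_sq.integral_prod_right.mono' (hmeas.pow 2) ?_)
  filter_upwards [ae_memLp_two_prodMk_right hW] with y hy
  rw [norm_of_nonneg (sq_nonneg _)]
  exact sq_integral_le_integral_sq hy

theorem memLp_two_integral_prodMk_left (hW : MemLp W 2 (μ.prod ν)) :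
    MemLp (fun x => ∫ y, W (x, y) ∂ν) 2 μ :=
  memLp_two_integral_prodMk_right (hW.comp_measurePreserving Measure.measurePreserving_swap)

theorem integrable_variance_prodMk_right (hW : MemLp W 2 (μ.prod ν)) :
    Integrable (fun y => Var[fun x => W (x, y); μ]) ν := by
  refine (hW.integrable_sq.integral_prod_right.sub
    (memLp_two_integral_prodMk_right hW).integrable_sq).congr ?_
  filter_upwards [ae_memLp_two_prodMk_right hW] with y hy
  exact (variance_eq_sub hy).symm

theorem variance_prod_eq_integral_variance_add (hW : MemLp W 2 (μ.prod ν)) :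
    Var[W; μ.prod ν] = ∫ y, Var[fun x => W (x, y); μ] ∂ν + Var[fun y => ∫ x, W (x, y) ∂μ; ν] := by
  have hmarg := memLp_two_integral_prodMk_right hW
  have hfiber : ∫ y, Var[fun x => W (x, y); μ] ∂ν =
      ∫ z, W z ^ 2 ∂μ.prod ν - ∫ y, (∫ x, W (x, y) ∂μ) ^ 2 ∂ν := by
    rw [integral_prod_symm _ hW.integrable_sq,
      ← integral_sub hW.integrable_sq.integral_prod_right hmarg.integrable_sq]
    refine integral_congr_ae ?_
    filter_upwards [ae_memLp_two_prodMk_right hW] with y hy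
    exact variance_eq_sub hy
  rw [variance_eq_sub hW, variance_eq_sub hmarg, hfiber,
    integral_prod_symm _ (hW.integrable one_le_two)]
  simp only [Pi.pow_apply]
  ring

theorem variance_integral_prodMk_right_le (hW : MemLp W 2 (μ.prod ν)) :
    Var[fun y => ∫ x, W (x, y) ∂μ; ν] ≤ ∫ x, Var[fun y => W (x, y); ν] ∂μ := by
  set V : α × β → ℝ := fun z => W z - ∫ y, W (z.1, y) ∂ν
  have hV : MemLp V 2 (μ.prod ν) := hW.sub ((memLp_two_integral_prodMk_left hW).comp_fst ν)
  have hWi : Integrable W (μ.prod ν) := hW.integrable one_le_two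
  have hcenter : ∀ᵐ y ∂ν, ∫ x, W (x, y) ∂μ - ∫ y, ∫ x, W (x, y) ∂μ ∂ν = ∫ x, V (x, y) ∂μ := by
    filter_upwards [hWi.prod_left_ae] with y hy
    rw [integral_sub hy hWi.integral_prod_left,
      integral_integral_swap (f := fun y x => W (x, y)) hWi.swap]
  calc Var[fun y => ∫ x, W (x, y) ∂μ; ν]
      = ∫ y, (∫ x, V (x, y) ∂μ) ^ 2 ∂ν := by
        rw [variance_eq_integral hWi.integral_prod_right.aestronglyMeasurable.aemeasurable]
        refine integral_congr_ae ?_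
        filter_upwards [hcenter] with y hy
        rw [hy]
    _ ≤ ∫ y, ∫ x, V (x, y) ^ 2 ∂μ ∂ν := by
        refine integral_mono_ae (memLp_two_integral_prodMk_right hV).integrable_sq
          hV.integrable_sq.integral_prod_right ?_
        filter_upwards [ae_memLp_two_prodMk_right hV] with y hy
        exact sq_integral_le_integral_sq hy
    _ = ∫ x, ∫ y, V (x, y) ^ 2 ∂ν ∂μ := integral_integral_swap hV.integrable_sq.swap
    _ = ∫ x, Var[fun y => W (x, y); ν] ∂μ := by
        refine integral_congr_ae ?_
        filter_upwards [hW.aestronglyMeasurable.prodMk_left] with x hx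
        exact (variance_eq_integral hx.aemeasurable).symm

theorem efronStein_prod (hW : MemLp W 2 (μ.prod ν)) :
    Var[W; μ.prod ν] ≤ ∫ y, Var[fun x => W (x, y); μ] ∂ν + ∫ x, Var[fun y => W (x, y); ν] ∂μ := by
  rw [variance_prod_eq_integral_variance_add hW]
  gcongr
  exact variance_integral_prodMk_right_le hW

theorem variance_prod_le_two_mul_of_symmetric {W : α × α → ℝ} (hW : MemLp W 2 (μ.prod μ))
    (hsymm : ∀ x y, W (x, y) = W (y, x)) :
    Var[W; μ.prod μ] ≤ 2 * ∫ y, Var[fun x => W (x, y); μ] ∂μ := by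
  refine (efronStein_prod hW).trans_eq ?_
  simp only [two_mul, hsymm]

end EfronStein

theorem memLp_of_ae_mem_isCompact {X : Type*} [TopologicalSpace X] [MeasurableSpace X]
    [OpensMeasurableSpace X] {μ : Measure X} [IsFiniteMeasure μ] {K : Set X} {f : X → ℝ}
    (hK : IsCompact K) (hμ : ∀ᵐ x ∂μ, x ∈ K) (hf : Continuous f) (q : ENNReal) : MemLp f q μ := by
  obtain ⟨C, hC⟩ := hK.exists_bound_of_continuousOn hf.continuousOn
  exact MemLp.of_bound hf.aestronglyMeasurable C (hμ.mono hC)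

/-- The uniform probability measure on the interval `(0, h)`. -/
noncomputable def uniformMeasure (h : ℝ) : Measure ℝ := volume[|Ioo 0 h]

section UniformMeasure

variable {h : ℝ} {f : ℝ → ℝ} {F : ℝ × ℝ → ℝ}

theorem isProbabilityMeasure_uniformMeasure (hh : 0 < h) :
    IsProbabilityMeasure (uniformMeasure h) :=
  cond_isProbabilityMeasure_of_finite (by simpa using hh) (by simp)

theorem uniformMeasure_eq_smul (h : ℝ) :
    uniformMeasure h = (ENNReal.ofReal h)⁻¹ • volume.restrict (Ioo 0 h) := by
  simp [uniformMeasure, ProbabilityTheory.cond]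

theorem uniformMeasure_prod_eq_smul (h : ℝ) :
    (uniformMeasure h).prod (uniformMeasure h) =
      (ENNReal.ofReal h)⁻¹ ^ 2 • volume.restrict (Ioo 0 h ×ˢ Ioo 0 h) := by
  rw [uniformMeasure_eq_smul, Measure.prod_smul_left, Measure.prod_smul_right,
    Measure.prod_restrict, smul_smul, sq, Measure.volume_eq_prod]

theorem ae_mem_Icc_uniformMeasure (h : ℝ) : ∀ᵐ x ∂uniformMeasure h, x ∈ Icc 0 h :=
  (ae_cond_mem measurableSet_Ioo).mono fun _ hx => Ioo_subset_Icc_self hx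

theorem integral_uniformMeasure (hh : 0 < h) (f : ℝ → ℝ) :
    ∫ x, f x ∂uniformMeasure h = h⁻¹ * ∫ x in 0..h, f x := by
  rw [uniformMeasure_eq_smul, integral_smul_measure, intervalIntegral.integral_of_le hh.le,
    integral_Ioc_eq_integral_Ioo, ENNReal.toReal_inv, ENNReal.toReal_ofReal hh.le, smul_eq_mul]

theorem integrable_uniformMeasure_iff (hh : 0 < h) :
    Integrable f (uniformMeasure h) ↔ IntervalIntegrable f volume 0 h := by
  rw [uniformMeasure_eq_smul, integrable_smul_measure (by simp) (by simpa using hh),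
    intervalIntegrable_iff_integrableOn_Ioo_of_le hh.le, IntegrableOn]

theorem memLp_uniformMeasure (hh : 0 < h) (hf : Continuous f) (q : ENNReal) :
    MemLp f q (uniformMeasure h) := by
  have := isProbabilityMeasure_uniformMeasure hh
  exact memLp_of_ae_mem_isCompact isCompact_Icc (ae_mem_Icc_uniformMeasure h) hf q

theorem memLp_uniformMeasure_prod (hh : 0 < h) (hF : Continuous F) (q : ENNReal) :
    MemLp F q ((uniformMeasure h).prod (uniformMeasure h)) := by
  have := isProbabilityMeasure_uniformMeasure hh
  refine memLp_of_ae_mem_isCompact (K := Icc 0 h ×ˢ Icc 0 h)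
    (isCompact_Icc.prod isCompact_Icc) ?_ hF q
  filter_upwards [Measure.quasiMeasurePreserving_fst.ae (ae_mem_Icc_uniformMeasure h),
    Measure.quasiMeasurePreserving_snd.ae (ae_mem_Icc_uniformMeasure h)] with z hz₁ hz₂
  exact ⟨hz₁, hz₂⟩

end UniformMeasure

section SymmetricSquare

variable {h k : ℝ}

theorem sq_mul_variance_sub_le {u p : ℝ → ℝ} {s : Set ℝ} (hh : 0 < h) (hk : 0 < k)
    (hkh : k * h < π) (hcot : k * h * cot (k * h) = -1) (hu : Continuous u) (hs : s.Countable)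
    (hup : ∀ x ∉ s, HasDerivAt u (p x) x) (hp : MemLp p 2 (uniformMeasure h)) :
    k ^ 2 * (Var[u; uniformMeasure h] - 2 * u h * ∫ x, u x ∂uniformMeasure h) ≤
      ∫ x, p x ^ 2 ∂uniformMeasure h := by
  have := isProbabilityMeasure_uniformMeasure hh
  have hdual := sq_mul_integral_sq_sub_le_integral_deriv_sq hh.le hk hkh hu hs hup
    ((integrable_uniformMeasure_iff hh).1 (hp.integrable one_le_two))
    ((integrable_uniformMeasure_iff hh).1 hp.integrable_sq)
  rw [variance_eq_sub (memLp_uniformMeasure hh hu 2)]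
  simp only [Pi.pow_apply, integral_uniformMeasure hh]
  have hkcot : k * cot (k * h) = -h⁻¹ := by
    field_simp
    linarith
  rw [hkcot] at hdual
  calc _ = h⁻¹ * _ := by ring
    _ ≤ _ := mul_le_mul_of_nonneg_left hdual (inv_nonneg.2 hh.le)

theorem sq_mul_variance_sub_shift_le {u p : ℝ → ℝ} {s : Set ℝ} (hh : 0 < h) (hk : 0 < k)
    (hkh : k * h < π) (hcot : k * h * cot (k * h) = -1) (hu : Continuous u) (hs : s.Countable)
    (hup : ∀ x ∉ s, HasDerivAt u (p x) x) (hp : MemLp p 2 (uniformMeasure h)) (c : ℝ) :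
    k ^ 2 * (Var[u; uniformMeasure h] - 2 * c * (u h - ∫ x, u x ∂uniformMeasure h + c)) ≤
      ∫ x, p x ^ 2 ∂uniformMeasure h := by
  have := isProbabilityMeasure_uniformMeasure hh
  set d : ℝ := c - ∫ x, u x ∂uniformMeasure h with hd
  have hui : Integrable u (uniformMeasure h) :=
    (memLp_uniformMeasure hh hu 2).integrable one_le_two
  have hmean : ∫ x, (u x + d) ∂uniformMeasure h = c := by
    rw [integral_add hui (integrable_const d), integral_const, probReal_univ, one_smul, hd]
    ring
  have hshift := sq_mul_variance_sub_le hh hk hkh hcot (hu.add_const d) hs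
    (fun x hx => (hup x hx).add_const d) hp
  rw [variance_add_const hui.aestronglyMeasurable, hmean] at hshift
  refine le_trans (le_of_eq ?_) hshift
  rw [hd]
  ring

-- The fibrewise bound is used with the shift `c = m / 2`, `m` the mean of `W`: averaging over `y`
-- leaves the boundary term `2 c (m - c)`, which is largest there.
theorem sq_mul_integral_variance_add_le {W p : ℝ × ℝ → ℝ} (hh : 0 < h) (hk : 0 < k)
    (hkh : k * h < π) (hcot : k * h * cot (k * h) = -1) (hW : Continuous W)
    (hWp : ∀ x y, x ≠ y → HasDerivAt (fun t => W (t, y)) (p (x, y)) x)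
    (hp : MemLp p 2 ((uniformMeasure h).prod (uniformMeasure h)))
    (htrace : ∫ y, W (h, y) ∂uniformMeasure h = 0) :
    k ^ 2 * (∫ y, Var[fun x => W (x, y); uniformMeasure h] ∂uniformMeasure h +
        (∫ z, W z ∂(uniformMeasure h).prod (uniformMeasure h)) ^ 2 / 2) ≤
      ∫ z, p z ^ 2 ∂(uniformMeasure h).prod (uniformMeasure h) := by
  have := isProbabilityMeasure_uniformMeasure hh
  set μ := uniformMeasure h
  set m : ℝ := ∫ z, W z ∂μ.prod μ with hm
  have hW2 : MemLp W 2 (μ.prod μ) := memLp_uniformMeasure_prod hh hW 2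
  have hVar : Integrable (fun y => Var[fun x => W (x, y); μ]) μ :=
    integrable_variance_prodMk_right hW2
  have hWi : Integrable W (μ.prod μ) := hW2.integrable one_le_two
  have hWh : Integrable (fun y => W (h, y)) μ :=
    (memLp_uniformMeasure hh (by fun_prop : Continuous fun y => W (h, y)) 1).integrable le_rfl
  have hdiff : Integrable (fun y => W (h, y) - ∫ x, W (x, y) ∂μ) μ :=
    hWh.sub hWi.integral_prod_right
  have hbdry : Integrable (fun y => W (h, y) - ∫ x, W (x, y) ∂μ + m / 2) μ :=
    hdiff.add (integrable_const _)
  have hbdry_mean : ∫ y, (W (h, y) - ∫ x, W (x, y) ∂μ + m / 2) ∂μ = -(m / 2) := by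
    rw [integral_add hdiff (integrable_const _),
      integral_sub hWh hWi.integral_prod_right, htrace, ← integral_prod_symm _ hWi, ← hm,
      integral_const, probReal_univ, one_smul]
    ring
  calc k ^ 2 * (∫ y, Var[fun x => W (x, y); μ] ∂μ + m ^ 2 / 2)
      = ∫ y, k ^ 2 * (Var[fun x => W (x, y); μ]
          - 2 * (m / 2) * (W (h, y) - ∫ x, W (x, y) ∂μ + m / 2)) ∂μ := by
        rw [integral_const_mul, integral_sub hVar (hbdry.const_mul _), integral_const_mul,
          hbdry_mean]
        ring
    _ ≤ ∫ y, ∫ x, p (x, y) ^ 2 ∂μ ∂μ := by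
        refine integral_mono_ae ((hVar.sub (hbdry.const_mul _)).const_mul _)
          hp.integrable_sq.integral_prod_right ?_
        filter_upwards [ae_memLp_two_prodMk_right hp] with y hy
        exact sq_mul_variance_sub_shift_le hh hk hkh hcot (by fun_prop) (countable_singleton y)
          (fun x hx => hWp x y hx) hy (m / 2)
    _ = ∫ z, p z ^ 2 ∂μ.prod μ := (integral_prod_symm _ hp.integrable_sq).symm

theorem sq_mul_integral_sq_le_of_symmetric {W p : ℝ × ℝ → ℝ} (hh : 0 < h) (hk : 0 < k)
    (hkh : k * h < π) (hcot : k * h * cot (k * h) = -1) (hW : Continuous W)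
    (hsymm : ∀ x y, W (x, y) = W (y, x))
    (hWp : ∀ x y, x ≠ y → HasDerivAt (fun t => W (t, y)) (p (x, y)) x)
    (hp : MemLp p 2 ((uniformMeasure h).prod (uniformMeasure h)))
    (htrace : ∫ y, W (h, y) ∂uniformMeasure h = 0) :
    k ^ 2 * ∫ z, W z ^ 2 ∂(uniformMeasure h).prod (uniformMeasure h) ≤
      2 * ∫ z, p z ^ 2 ∂(uniformMeasure h).prod (uniformMeasure h) := by
  have := isProbabilityMeasure_uniformMeasure hh
  have hW2 := memLp_uniformMeasure_prod hh hW 2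
  have hfiber := sq_mul_integral_variance_add_le hh hk hkh hcot hW hWp hp htrace
  have hvar := variance_prod_le_two_mul_of_symmetric hW2 hsymm
  rw [variance_eq_sub hW2] at hvar
  simp only [Pi.pow_apply] at hvar
  nlinarith [mul_le_mul_of_nonneg_left hvar (sq_nonneg k)]

end SymmetricSquare

section Reflection

theorem ae_fst_ne_snd {α : Type*} [MeasurableSpace α] [MeasurableEq α] (μ ν : Measure α)
    [SFinite ν] [NullSingletonClass ν] : ∀ᵐ z ∂μ.prod ν, z.1 ≠ z.2 := by
  have hmeas : MeasurableSet {z : α × α | z.1 ≠ z.2} := measurableSet_diagonal.compl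
  refine (Measure.ae_prod_iff_ae_ae hmeas).2 (ae_of_all _ fun x => ?_)
  filter_upwards [ν.ae_ne x] with y hy using hy.symm

variable {α : Type*} [LinearOrder α] [TopologicalSpace α] [OrderClosedTopology α]
  [SecondCountableTopology α] [MeasurableSpace α] [BorelSpace α] {μ : Measure α} [SFinite μ]
  [NullSingletonClass μ]

theorem integral_prod_eq_setIntegral_lt_add_swap {F : α × α → ℝ} (hF : Integrable F (μ.prod μ)) :
    ∫ z, F z ∂μ.prod μ = ∫ z in {z | z.2 < z.1}, (F z + F z.swap) ∂μ.prod μ := by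
  have hmeas : MeasurableSet {z : α × α | z.2 < z.1} :=
    measurableSet_lt measurable_snd measurable_fst
  have hcompl : ({z : α × α | z.2 < z.1}ᶜ : Set (α × α)) =ᵐ[μ.prod μ]
      Prod.swap ⁻¹' {z | z.2 < z.1} := by
    filter_upwards [ae_fst_ne_snd μ μ] with z hz
    exact propext (not_lt.trans hz.le_iff_lt)
  have hswap : ∫ z in {z | z.2 < z.1}ᶜ, F z ∂μ.prod μ =
      ∫ z in {z | z.2 < z.1}, F z.swap ∂μ.prod μ := by
    rw [setIntegral_congr_set hcompl]
    exact Measure.measurePreserving_swap.setIntegral_preimage_emb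
      MeasurableEquiv.prodComm.measurableEmbedding (fun z => F z.swap) {z | z.2 < z.1}
  calc ∫ z, F z ∂μ.prod μ
      = ∫ z in {z | z.2 < z.1}, F z ∂μ.prod μ + ∫ z in {z | z.2 < z.1}, F z.swap ∂μ.prod μ := by
        rw [← hswap, integral_add_compl hmeas hF]
    _ = ∫ z in {z | z.2 < z.1}, (F z + F z.swap) ∂μ.prod μ :=
        (integral_add hF.integrableOn hF.swap.integrableOn).symm

end Reflection

section Triangle

theorem nullSingletonClass_uniformMeasure (h : ℝ) : NullSingletonClass (uniformMeasure h) :=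
  ⟨fun x => cond_absolutelyContinuous (measure_singleton x)⟩

/-- The right isosceles triangle `0 < x₂ < x₁ < h`, with coordinates indexed from `0`. -/
def triangle (h : ℝ) : Set (EuclideanSpace ℝ (Fin 2)) :=
  {x | 0 < x 1 ∧ x 1 < x 0 ∧ x 0 < h}

variable {h : ℝ}

theorem measurableSet_triangle (h : ℝ) : MeasurableSet (triangle h) := by
  unfold triangle
  measurability

theorem measurePreserving_euclideanSpace_prod :
    MeasurePreserving (fun x : EuclideanSpace ℝ (Fin 2) => (x 0, x 1)) :=
  (volume_preserving_finTwoArrow ℝ).comp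
    (EuclideanSpace.volume_preserving_symm_measurableEquiv_toLp (Fin 2))

theorem preimage_lt_inter_square (h : ℝ) :
    (fun x : EuclideanSpace ℝ (Fin 2) => (x 0, x 1)) ⁻¹'
      ({z | z.2 < z.1} ∩ Ioo 0 h ×ˢ Ioo 0 h) = triangle h := by
  ext x
  constructor
  · rintro ⟨hlt, hx₀, hx₁⟩
    exact ⟨hx₁.1, hlt, hx₀.2⟩
  · rintro ⟨hpos, hlt, hxh⟩
    exact ⟨hlt, ⟨hpos.trans hlt, hxh⟩, hpos, hlt.trans hxh⟩

theorem integral_uniformMeasure_prod_eq_setIntegral_triangle (hh : 0 < h) {F : ℝ × ℝ → ℝ}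
    (hF : Integrable F ((uniformMeasure h).prod (uniformMeasure h))) :
    ∫ z, F z ∂(uniformMeasure h).prod (uniformMeasure h) =
      h⁻¹ ^ 2 * ∫ x in triangle h, (F (x 0, x 1) + F (x 1, x 0)) := by
  have := isProbabilityMeasure_uniformMeasure hh
  have := nullSingletonClass_uniformMeasure h
  have hemb : MeasurableEmbedding fun x : EuclideanSpace ℝ (Fin 2) => (x 0, x 1) :=
    ((MeasurableEquiv.toLp 2 (Fin 2 → ℝ)).symm.trans
      MeasurableEquiv.finTwoArrow).measurableEmbedding
  rw [integral_prod_eq_setIntegral_lt_add_swap hF, uniformMeasure_prod_eq_smul,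
    Measure.restrict_smul,
    Measure.restrict_restrict (measurableSet_lt measurable_snd measurable_fst),
    integral_smul_measure, ENNReal.toReal_pow, ENNReal.toReal_inv, ENNReal.toReal_ofReal hh.le,
    smul_eq_mul, ← measurePreserving_euclideanSpace_prod.setIntegral_preimage_emb hemb,
    preimage_lt_inter_square]
  rfl

end Triangle

section PartialDerivatives

theorem gradient_apply_eq_fderiv_single {ι : Type*} [Fintype ι] [DecidableEq ι]
    (w : EuclideanSpace ℝ ι → ℝ) (x : EuclideanSpace ℝ ι) (i : ι) :
    gradient w x i = fderiv ℝ w x (EuclideanSpace.single i 1) := by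
  rw [gradient, ← InnerProductSpace.toDual_symm_apply, EuclideanSpace.inner_single_right]
  simp

theorem continuous_gradient {ι : Type*} [Fintype ι] {w : EuclideanSpace ℝ ι → ℝ}
    (hw : ContDiff ℝ 1 w) : Continuous (gradient w) :=
  (InnerProductSpace.toDual ℝ _).symm.continuous.comp (hw.continuous_fderiv one_ne_zero)

theorem hasDerivAt_comp_toLp_update {ι : Type*} [Fintype ι] [DecidableEq ι]
    {w : EuclideanSpace ℝ ι → ℝ} (hw : Differentiable ℝ w) (x : ι → ℝ) (i : ι) (t : ℝ) :
    HasDerivAt (fun s => w (WithLp.toLp 2 (Function.update x i s)))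
      (gradient w (WithLp.toLp 2 (Function.update x i t)) i) t := by
  rw [gradient_apply_eq_fderiv_single]
  exact (hw _).hasFDerivAt.comp_hasDerivAt t
    ((PiLp.hasFDerivAt_toLp 2 _).comp_hasDerivAt t (hasDerivAt_update x i t))

variable {w : EuclideanSpace ℝ (Fin 2) → ℝ}

theorem hasDerivAt_partial_left (hw : Differentiable ℝ w) (x y : ℝ) :
    HasDerivAt (fun t => w !₂[t, y]) (gradient w !₂[x, y] 0) x := by
  have hupdate : ∀ t, Function.update ![x, y] 0 t = ![t, y] := fun t => by
    ext i
    fin_cases i <;> rfl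
  simpa only [hupdate] using hasDerivAt_comp_toLp_update hw ![x, y] 0 x

theorem hasDerivAt_partial_right (hw : Differentiable ℝ w) (x y : ℝ) :
    HasDerivAt (fun t => w !₂[x, t]) (gradient w !₂[x, y] 1) y := by
  have hupdate : ∀ t, Function.update ![x, y] 1 t = ![x, t] := fun t => by
    ext i
    fin_cases i <;> rfl
  simpa only [hupdate] using hasDerivAt_comp_toLp_update hw ![x, y] 1 y

end PartialDerivatives

/-- The extension of `w` from the half plane `x₂ ≤ x₁` to the plane by reflection across the
diagonal. -/
noncomputable def diagExtension (w : EuclideanSpace ℝ (Fin 2) → ℝ) (z : ℝ × ℝ) : ℝ :=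
  w !₂[max z.1 z.2, min z.1 z.2]

/-- The partial derivative of `diagExtension w` in the first variable away from the diagonal; its
values on the diagonal are irrelevant. -/
noncomputable def diagExtensionDeriv (w : EuclideanSpace ℝ (Fin 2) → ℝ) (z : ℝ × ℝ) : ℝ :=
  if z.1 < z.2 then gradient w !₂[z.2, z.1] 1 else gradient w !₂[z.1, z.2] 0

section DiagExtension

variable {h : ℝ} {w : EuclideanSpace ℝ (Fin 2) → ℝ}

theorem continuous_diagExtension (hw : Continuous w) : Continuous (diagExtension w) := by
  unfold diagExtension
  fun_prop

theorem diagExtension_comm (w : EuclideanSpace ℝ (Fin 2) → ℝ) (x y : ℝ) :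
    diagExtension w (x, y) = diagExtension w (y, x) := by
  simp only [diagExtension, max_comm, min_comm]

theorem diagExtension_of_le {x y : ℝ} (hxy : y ≤ x) : diagExtension w (x, y) = w !₂[x, y] := by
  simp only [diagExtension, max_eq_left hxy, min_eq_right hxy]

theorem hasDerivAt_diagExtension (hw : Differentiable ℝ w) {x y : ℝ} (hxy : x ≠ y) :
    HasDerivAt (fun t => diagExtension w (t, y)) (diagExtensionDeriv w (x, y)) x := by
  rcases hxy.lt_or_gt with hlt | hgt
  · have heq : (fun t => diagExtension w (t, y)) =ᶠ[𝓝 x] fun t => w !₂[y, t] := by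
      filter_upwards [eventually_lt_nhds hlt] with t ht
      rw [diagExtension_comm, diagExtension_of_le ht.le]
    simpa only [diagExtensionDeriv, if_pos hlt] using
      (hasDerivAt_partial_right hw y x).congr_of_eventuallyEq heq
  · have heq : (fun t => diagExtension w (t, y)) =ᶠ[𝓝 x] fun t => w !₂[t, y] := by
      filter_upwards [eventually_gt_nhds hgt] with t ht
      exact diagExtension_of_le ht.le
    simpa only [diagExtensionDeriv, if_neg hgt.not_gt] using
      (hasDerivAt_partial_left hw x y).congr_of_eventuallyEq heq

theorem memLp_diagExtensionDeriv (hh : 0 < h) (hw : ContDiff ℝ 1 w) (q : ENNReal) :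
    MemLp (diagExtensionDeriv w) q ((uniformMeasure h).prod (uniformMeasure h)) := by
  have hgrad : Continuous (gradient w) := continuous_gradient hw
  have habove : Continuous fun z : ℝ × ℝ => gradient w !₂[z.2, z.1] 1 := by fun_prop
  have hbelow : Continuous fun z : ℝ × ℝ => gradient w !₂[z.1, z.2] 0 := by fun_prop
  have hmeas : MeasurableSet {z : ℝ × ℝ | z.1 < z.2} :=
    measurableSet_lt measurable_fst measurable_snd
  exact MemLp.piecewise (s := {z | z.1 < z.2}) hmeas
    ((memLp_uniformMeasure_prod hh habove q).restrict _)
    ((memLp_uniformMeasure_prod hh hbelow q).restrict _)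

theorem diagExtensionDeriv_sq_add_sq {x y : ℝ} (hxy : y < x) :
    diagExtensionDeriv w (x, y) ^ 2 + diagExtensionDeriv w (y, x) ^ 2 =
      ‖gradient w !₂[x, y]‖ ^ 2 := by
  simp only [diagExtensionDeriv, if_pos hxy, if_neg hxy.not_gt, EuclideanSpace.real_norm_sq_eq,
    Fin.sum_univ_two]

theorem vec2_eta (x : EuclideanSpace ℝ (Fin 2)) : !₂[x 0, x 1] = x := by
  ext i
  fin_cases i <;> rfl

theorem integral_diagExtension_sq (hh : 0 < h) (hw : Continuous w) :
    ∫ z, diagExtension w z ^ 2 ∂(uniformMeasure h).prod (uniformMeasure h) =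
      h⁻¹ ^ 2 * (2 * ∫ x in triangle h, w x ^ 2) := by
  rw [integral_uniformMeasure_prod_eq_setIntegral_triangle hh
    (memLp_uniformMeasure_prod hh (continuous_diagExtension hw) 2).integrable_sq,
    ← integral_const_mul 2]
  congr 1
  refine setIntegral_congr_fun (measurableSet_triangle h) fun x hx => ?_
  simp only [diagExtension_comm w (x 1), diagExtension_of_le hx.2.1.le, vec2_eta]
  ring

theorem integral_diagExtensionDeriv_sq (hh : 0 < h) (hw : ContDiff ℝ 1 w) :
    ∫ z, diagExtensionDeriv w z ^ 2 ∂(uniformMeasure h).prod (uniformMeasure h) =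
      h⁻¹ ^ 2 * ∫ x in triangle h, ‖gradient w x‖ ^ 2 := by
  rw [integral_uniformMeasure_prod_eq_setIntegral_triangle hh
    (memLp_diagExtensionDeriv hh hw 2).integrable_sq]
  congr 1
  refine setIntegral_congr_fun (measurableSet_triangle h) fun x hx => ?_
  simp only [diagExtensionDeriv_sq_add_sq hx.2.1, vec2_eta]

theorem integral_diagExtension_leg (hh : 0 < h) (w : EuclideanSpace ℝ (Fin 2) → ℝ) :
    ∫ y, diagExtension w (h, y) ∂uniformMeasure h = h⁻¹ * ∫ t in 0..h, w !₂[h, t] := by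
  rw [integral_uniformMeasure hh]
  congr 1
  refine intervalIntegral.integral_congr fun t ht => ?_
  rw [uIcc_of_le hh.le] at ht
  exact diagExtension_of_le ht.2

theorem sq_mul_setIntegral_triangle_sq_le {k : ℝ} (hh : 0 < h) (hk : 0 < k) (hkh : k * h < π)
    (hcot : k * h * cot (k * h) = -1) (hw : ContDiff ℝ 1 w)
    (hleg : ∫ t in 0..h, w !₂[h, t] = 0) :
    k ^ 2 * ∫ x in triangle h, w x ^ 2 ≤ ∫ x in triangle h, ‖gradient w x‖ ^ 2 := by
  have hsquare := sq_mul_integral_sq_le_of_symmetric hh hk hkh hcot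
    (continuous_diagExtension hw.continuous) (diagExtension_comm w)
    (fun _ _ hxy => hasDerivAt_diagExtension (hw.differentiable one_ne_zero) hxy)
    (memLp_diagExtensionDeriv hh hw 2)
    (by rw [integral_diagExtension_leg hh, hleg, mul_zero])
  rw [integral_diagExtension_sq hh hw.continuous, integral_diagExtensionDeriv_sq hh hw] at hsquare
  have hscale : 0 < 2 * h⁻¹ ^ 2 := by positivity
  refine le_of_mul_le_mul_left ?_ hscale
  linarith

end DiagExtension

section Extremal

variable {h k : ℝ}

theorem sin_eq_neg_mul_cos_of_mul_cot_eq {z : ℝ} (hz : z * cot z = -1) :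
    sin z = -(z * cos z) := by
  have hsin : sin z ≠ 0 := fun hsin => by simp [cot_eq_cos_div_sin, hsin] at hz
  rw [cot_eq_cos_div_sin] at hz
  field_simp at hz
  linarith

theorem integral_cos_const_mul_uniformMeasure (hh : 0 < h) (hk : 0 < k)
    (hcot : k * h * cot (k * h) = -1) :
    ∫ x, cos (k * x) ∂uniformMeasure h = -cos (k * h) := by
  rw [integral_uniformMeasure hh, intervalIntegral.integral_comp_mul_left _ hk.ne', integral_cos,
    sin_eq_neg_mul_cos_of_mul_cot_eq hcot]
  simp only [mul_zero, sin_zero, sub_zero, smul_eq_mul, mul_neg, neg_inj]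
  field_simp

theorem integral_sin_sq_eq_cos_sq_add (hh : 0 < h) (hk : 0 < k)
    (hcot : k * h * cot (k * h) = -1) :
    ∫ x, sin (k * x) ^ 2 ∂uniformMeasure h =
      ∫ x, cos (k * x) ^ 2 ∂uniformMeasure h + (∫ x, cos (k * x) ∂uniformMeasure h) ^ 2 := by
  rw [integral_cos_const_mul_uniformMeasure hh hk hcot, integral_uniformMeasure hh,
    integral_uniformMeasure hh,
    intervalIntegral.integral_comp_mul_left (fun x => sin x ^ 2) hk.ne',
    intervalIntegral.integral_comp_mul_left (fun x => cos x ^ 2) hk.ne', integral_sin_sq,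
    integral_cos_sq, sin_eq_neg_mul_cos_of_mul_cot_eq hcot]
  simp only [mul_zero, sin_zero, cos_zero, mul_one, neg_mul, sub_neg_eq_add, zero_add, sub_zero,
    smul_eq_mul, mul_neg, even_two, Even.neg_pow]
  field_simp
  ring

theorem integral_sin_sq_uniformMeasure_pos (hh : 0 < h) (hk : 0 < k)
    (hcot : k * h * cot (k * h) = -1) : 0 < ∫ x, sin (k * x) ^ 2 ∂uniformMeasure h := by
  have := isProbabilityMeasure_uniformMeasure hh
  have hsin : Integrable (fun x => sin (k * x) ^ 2) (uniformMeasure h) :=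
    (memLp_uniformMeasure hh (by fun_prop) 1).integrable le_rfl
  have hcos : Integrable (fun x => cos (k * x) ^ 2) (uniformMeasure h) :=
    (memLp_uniformMeasure hh (by fun_prop) 1).integrable le_rfl
  have hone : ∫ x, sin (k * x) ^ 2 ∂uniformMeasure h +
      ∫ x, cos (k * x) ^ 2 ∂uniformMeasure h = 1 := by
    rw [← integral_add hsin hcos]
    simp [sin_sq_add_cos_sq]
  have hle := integral_sin_sq_eq_cos_sq_add hh hk hcot
  nlinarith [sq_nonneg (∫ x, cos (k * x) ∂uniformMeasure h)]

theorem setIntegral_triangle_add {f : ℝ → ℝ} (hh : 0 < h) (hf : Continuous f) :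
    ∫ x in triangle h, (f (x 0) + f (x 1)) = h ^ 2 * ∫ x, f x ∂uniformMeasure h := by
  have := isProbabilityMeasure_uniformMeasure hh
  have hF : Integrable (fun z : ℝ × ℝ => f z.1) ((uniformMeasure h).prod (uniformMeasure h)) :=
    (memLp_uniformMeasure_prod hh (by fun_prop) 1).integrable le_rfl
  have hsquare := integral_uniformMeasure_prod_eq_setIntegral_triangle hh hF
  rw [integral_fun_fst, probReal_univ, one_smul] at hsquare
  rw [hsquare]
  field_simp

theorem setIntegral_triangle_add_sq {f : ℝ → ℝ} (hh : 0 < h) (hf : Continuous f) :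
    ∫ x in triangle h, (f (x 0) + f (x 1)) ^ 2 =
      h ^ 2 * (∫ x, f x ^ 2 ∂uniformMeasure h + (∫ x, f x ∂uniformMeasure h) ^ 2) := by
  have := isProbabilityMeasure_uniformMeasure hh
  have hsq : Integrable (fun z : ℝ × ℝ => f z.1 ^ 2) ((uniformMeasure h).prod (uniformMeasure h)) :=
    (memLp_uniformMeasure_prod hh (by fun_prop) 1).integrable le_rfl
  have hmul : Integrable (fun z : ℝ × ℝ => f z.1 * f z.2)
      ((uniformMeasure h).prod (uniformMeasure h)) :=
    (memLp_uniformMeasure_prod hh (by fun_prop) 1).integrable le_rfl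
  have hsquare := integral_uniformMeasure_prod_eq_setIntegral_triangle hh (hsq.add hmul)
  rw [integral_add' hsq hmul, integral_fun_fst (fun x => f x ^ 2), integral_prod_mul, probReal_univ,
    one_smul, ← sq] at hsquare
  rw [hsquare, ← mul_assoc, ← mul_pow, mul_inv_cancel₀ hh.ne', one_pow, one_mul]
  congr with x
  simp only [Pi.add_apply]
  ring

/-- The function `cos (k x₁) + cos (k x₂)`, which attains the sharp constant. -/
noncomputable def extremal (k : ℝ) (x : EuclideanSpace ℝ (Fin 2)) : ℝ :=
  cos (k * x 0) + cos (k * x 1)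

theorem contDiff_extremal (k : ℝ) : ContDiff ℝ 1 (extremal k) := by
  unfold extremal
  fun_prop

theorem norm_gradient_extremal_sq (k : ℝ) (x : EuclideanSpace ℝ (Fin 2)) :
    ‖gradient (extremal k) x‖ ^ 2 = k ^ 2 * (sin (k * x 0) ^ 2 + sin (k * x 1) ^ 2) := by
  have hdiff : Differentiable ℝ (extremal k) := (contDiff_extremal k).differentiable one_ne_zero
  have hleft : gradient (extremal k) x 0 = -(k * sin (k * x 0)) := by
    simpa only [vec2_eta] using (hasDerivAt_partial_left hdiff (x 0) (x 1)).unique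
      ((hasDerivAt_cos_const_mul k (x 0)).add_const (cos (k * x 1)))
  have hright : gradient (extremal k) x 1 = -(k * sin (k * x 1)) := by
    simpa only [vec2_eta] using (hasDerivAt_partial_right hdiff (x 0) (x 1)).unique
      ((hasDerivAt_cos_const_mul k (x 1)).const_add (cos (k * x 0)))
  rw [EuclideanSpace.real_norm_sq_eq, Fin.sum_univ_two, hleft, hright]
  ring

theorem integral_extremal_leg (hh : 0 < h) (hk : 0 < k) (hcot : k * h * cot (k * h) = -1) :
    ∫ t in 0..h, extremal k !₂[h, t] = 0 := by
  have := isProbabilityMeasure_uniformMeasure hh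
  have hcos : Integrable (fun x => cos (k * x)) (uniformMeasure h) :=
    (memLp_uniformMeasure hh (by fun_prop) 1).integrable le_rfl
  have hmean : ∫ t, extremal k !₂[h, t] ∂uniformMeasure h = 0 := calc
    _ = ∫ t, (cos (k * h) + cos (k * t)) ∂uniformMeasure h := rfl
    _ = 0 := by
      rw [integral_add (integrable_const _) hcos,
        integral_cos_const_mul_uniformMeasure hh hk hcot]
      simp
  rw [integral_uniformMeasure hh] at hmean
  exact (mul_eq_zero_iff_left (inv_ne_zero hh.ne')).1 hmean

theorem setIntegral_triangle_extremal_sq (hh : 0 < h) (hk : 0 < k)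
    (hcot : k * h * cot (k * h) = -1) :
    ∫ x in triangle h, extremal k x ^ 2 = h ^ 2 * ∫ x, sin (k * x) ^ 2 ∂uniformMeasure h := by
  rw [integral_sin_sq_eq_cos_sq_add hh hk hcot]
  exact setIntegral_triangle_add_sq (f := fun t => cos (k * t)) hh (by fun_prop)

theorem setIntegral_triangle_norm_gradient_extremal_sq (hh : 0 < h) :
    ∫ x in triangle h, ‖gradient (extremal k) x‖ ^ 2 =
      k ^ 2 * (h ^ 2 * ∫ x, sin (k * x) ^ 2 ∂uniformMeasure h) := by
  simp only [norm_gradient_extremal_sq]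
  rw [integral_const_mul,
    setIntegral_triangle_add (f := fun t => sin (k * t) ^ 2) hh (by fun_prop)]

end Extremal

/-- The sharp constant `C₁(Ω,Γ)` in `‖w‖_{L²(Ω)} ≤ C₁ ‖∇w‖_{L²(Ω)}` for functions
with zero mean trace on `Γ`, where `Ω = {0 < x₂ < x₁ < h}` is an isosceles right
triangle and `Γ = {x₁ = h, x₂ ∈ [0,h]}` is one leg, equals `h/z̃₀`, where `z̃₀`
is the unique root of `z·cot z + 1 = 0` in `(0,π)` (`z̃₀ ≈ 2.02876`). -/
theorem triangle_one_leg_C1 (h : ℝ) (hh : 0 < h) (z₀ : ℝ)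
    (hz₀ : z₀ ∈ Set.Ioo 0 π ∧ z₀ * Real.cot z₀ + 1 = 0)
    (huniq : ∀ z ∈ Set.Ioo (0:ℝ) π, z * Real.cot z + 1 = 0 → z = z₀) :
    IsLeast {C : ℝ |
      ∀ w : EuclideanSpace ℝ (Fin 2) → ℝ, ContDiff ℝ 1 w →
        (∫ t in (0:ℝ)..h, w !₂[h, t]) = 0 →
        Real.sqrt (∫ x in {x : EuclideanSpace ℝ (Fin 2) |
            0 < x 1 ∧ x 1 < x 0 ∧ x 0 < h}, (w x) ^ 2) ≤
          C * Real.sqrt (∫ x in {x : EuclideanSpace ℝ (Fin 2) |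
            0 < x 1 ∧ x 1 < x 0 ∧ x 0 < h}, ‖gradient w x‖ ^ 2)}
      (h / z₀) := by
  obtain ⟨⟨hz₀_pos, hz₀_lt⟩, hz₀_cot⟩ := hz₀
  obtain ⟨k, rfl⟩ : ∃ k, z₀ = k * h := ⟨z₀ / h, (div_mul_cancel₀ z₀ hh.ne').symm⟩
  have hk : 0 < k := pos_of_mul_pos_left hz₀_pos hh.le
  have hcot : k * h * cot (k * h) = -1 := by linarith
  rw [div_mul_cancel_right₀ hh.ne']
  refine ⟨fun w hw hleg => ?_, fun C hC => ?_⟩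
  · rw [← div_eq_inv_mul, le_div_iff₀' hk, ← sqrt_sq hk.le, ← sqrt_mul (sq_nonneg k)]
    exact sqrt_le_sqrt (sq_mul_setIntegral_triangle_sq_le hh hk hz₀_lt hcot hw hleg)
  · have hC_extremal : √(∫ x in triangle h, extremal k x ^ 2) ≤
        C * √(∫ x in triangle h, ‖gradient (extremal k) x‖ ^ 2) :=
      hC (extremal k) (contDiff_extremal k) (integral_extremal_leg hh hk hcot)
    rw [setIntegral_triangle_norm_gradient_extremal_sq hh,
      setIntegral_triangle_extremal_sq hh hk hcot, sqrt_mul (sq_nonneg k), sqrt_sq hk.le,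
      ← mul_assoc] at hC_extremal
    have hnorm : 0 < √(h ^ 2 * ∫ x, sin (k * x) ^ 2 ∂uniformMeasure h) :=
      sqrt_pos.2 (mul_pos (pow_pos hh 2) (integral_sin_sq_uniformMeasure_pos hh hk hcot))
    exact (inv_le_iff_one_le_mul₀ hk).2 (one_le_of_le_mul_right₀ hnorm hC_extremal)
end
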